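/- Let $G$ be a simple graph on vertex set $\{1,\dots,n\}$ with edge set $E(G)$, and suppose that the complement graph of $G$ has at most $5$ edges. Let $\mathcal{M}_G$ be the set of real symmetric positive definite $n\times n$ matrices $K$ with $K_{ij}=0$ whenever $i\neq j$ and $ij\notin E(G)$, and let the maximum likelihood threshold $\mathrm{MLT}(G)$ be the smallest positive integer $m$ such that for Lebesgue-almost every real $n\times m$ matrix $X$ the function $K\mapsto \mathrm{tr}(XX^{T}K)-\log\det K$ attains a minimum on $\mathcal{M}_G$. For an integer $d\ge 0$, call $G$ $d$-independent if for Lebesgue-almost every $p:\{1,\dots,n\}\to\mathbb{R}^d$ the vectors $R_{ij}(p)\in(\mathbb{R}^d)^n$, $ij\in E(G)$, are linearly independent, where $R_{ij}(p)$ has $i$-th block $p(i)-p(j)$, $j$-th block $p(j)-p(i)$ and all other blocks zero (so $G$ is $0$-independent if and only if it has no edges). Then $$\mathrm{MLT}(G)=d+1,$$ where $d$ is the smallest nonnegative integer such that $G$ is $d$-independent. -/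

import Mathlib

open MeasureTheory Matrix

noncomputable section

/-- The objective function `K ↦ tr(S K) − log det K` of Gaussian maximum likelihood,
where `S` is the sample covariance matrix. -/
def mlObjective {n : ℕ} (S K : Matrix (Fin n) (Fin n) ℝ) : ℝ :=
  (S * K).trace - Real.log K.det

/-- The maximum likelihood threshold of a set `M` of positive definite matrices:
the smallest positive integer `d` such that for Lebesgue-almost every real `n × d`
matrix `X`, the function `K ↦ tr(X Xᵀ K) − log det K` attains a minimum on `M`. -/
def mlt (n : ℕ) (M : Set (Matrix (Fin n) (Fin n) ℝ)) : ℕ :=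
  sInf {d : ℕ | 0 < d ∧
    ∀ᵐ X : Fin n → Fin d → ℝ ∂volume,
      ∃ K ∈ M, ∀ K' ∈ M,
        mlObjective (Matrix.of X * (Matrix.of X)ᵀ) K ≤
          mlObjective (Matrix.of X * (Matrix.of X)ᵀ) K'}

/-- The Gaussian graphical model of a graph `G` on `{1,…,n}`: all symmetric positive
definite matrices whose off-diagonal entries vanish at non-edges of `G`. -/
def graphModel (n : ℕ) (G : SimpleGraph (Fin n)) : Set (Matrix (Fin n) (Fin n) ℝ) :=
  {K | K.PosDef ∧ ∀ i j, i ≠ j → ¬ G.Adj i j → K i j = 0}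

/-- The rigidity vector `R_{ij}(p)`: the block vector in `(ℝ^d)^n` whose `i`-th block is
`p i − p j`, whose `j`-th block is `p j − p i`, and whose other blocks are zero. -/
def rigidityVec {n d : ℕ} (p : Fin n → Fin d → ℝ) (i j : Fin n) : Fin n → Fin d → ℝ :=
  fun k => if k = i then p i - p j else if k = j then p j - p i else 0

/-- A graph `G` is `d`-independent if for Lebesgue-almost every `p : {1,…,n} → ℝ^d`,
the rigidity vectors `{R_{ij}(p) : ij ∈ E(G)}` are linearly independent; each edge is
listed once, as the pair `(i, j)` with `i < j`. For `d = 0` this says that `G` has no edges. -/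
def IsIndepGraph {n : ℕ} (d : ℕ) (G : SimpleGraph (Fin n)) : Prop :=
  ∀ᵐ p : Fin n → Fin d → ℝ ∂volume,
    LinearIndependent ℝ (fun e : {e : Fin n × Fin n // G.Adj e.1 e.2 ∧ e.1 < e.2} =>
      rigidityVec p e.1.1 e.1.2)

end

open MeasureTheory Matrix

open Filter Topology in
/-- If a linear family of linear maps is injective at one parameter, it is injective at almost
every parameter. -/
theorem ae_injective_of_injective {E P W : Type*} [NormedAddCommGroup E] [NormedSpace ℝ E]
    [FiniteDimensional ℝ E] [MeasurableSpace E] [BorelSpace E] (μ : Measure E)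
    [μ.IsAddHaarMeasure] [AddCommGroup P] [Module ℝ P] [FiniteDimensional ℝ P]
    [AddCommGroup W] [Module ℝ W] (L : E →ₗ[ℝ] P →ₗ[ℝ] W) (x₀ : E)
    (h : Function.Injective (L x₀)) : ∀ᵐ x ∂μ, Function.Injective (L x) := by
  obtain ⟨g, hg⟩ := (L x₀).exists_leftInverse_of_injective (LinearMap.ker_eq_bot.2 h)
  let b := Module.finBasis ℝ P
  let M : E →ₗ[ℝ] Matrix _ _ ℝ := (LinearMap.toMatrix b b).toLinearMap ∘ₗ
    (LinearMap.llcomp ℝ P W P g) ∘ₗ L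
  have hM : ∀ x, M x = LinearMap.toMatrix b b (g ∘ₗ L x) := fun x => rfl
  have hM0 : M x₀ = 1 := by rw [hM, hg, LinearMap.toMatrix_id]
  have hcont : Continuous fun x => (M x).det :=
    (LinearMap.continuous_of_finiteDimensional M).matrix_det
  have hinj : ∀ x, (M x).det ≠ 0 → Function.Injective (L x) := by
    intro x hx
    rw [hM, LinearMap.det_toMatrix] at hx
    have := (LinearMap.equivOfDetNeZero _ hx).injective
    exact Function.Injective.of_comp (f := g) (g := L x) this
  have hline : ∀ x, ∀ᵐ t : ℝ, (M (x₀ + t • x)).det ≠ 0 := by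
    intro x
    have hp : ∀ t : ℝ, (1 + (Polynomial.X : Polynomial ℝ) • (M x).map Polynomial.C).det.eval t
        = (M (x₀ + t • x)).det := by
      intro t
      rw [map_add, map_smul, hM0, ← Polynomial.coe_evalRingHom, RingHom.map_det]
      congr 1
      ext i j
      simp [Matrix.one_apply, apply_ite (Polynomial.eval t)]
      exact mul_comm _ _
    have hne : (1 + (Polynomial.X : Polynomial ℝ) • (M x).map Polynomial.C).det ≠ 0 := by
      intro h0
      have := hp 0
      rw [h0] at this
      simp [hM0] at this
    have hfin := Polynomial.finite_setOfPred_isRoot hne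
    have := hfin.countable.ae_notMem (volume : Measure ℝ)
    filter_upwards [this] with t ht
    intro h0
    exact ht (by simpa [Polynomial.IsRoot, hp] using h0)
  have hmeas : MeasurableSet {z : E × ℝ | (M (x₀ + z.2 • z.1)).det ≠ 0} := by
    have : Continuous fun z : E × ℝ => (M (x₀ + z.2 • z.1)).det := hcont.comp (by fun_prop)
    exact (isOpen_ne_fun this continuous_const).measurableSet
  have hswap := (Measure.ae_ae_comm (μ := μ) (ν := (volume : Measure ℝ))
    (p := fun x t => (M (x₀ + t • x)).det ≠ 0) hmeas).1 (Eventually.of_forall hline)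
  obtain ⟨t, ht, ht0⟩ := (hswap.and (Measure.ae_ne volume (0 : ℝ))).exists
  have hq : Measure.QuasiMeasurePreserving (fun y : E => t⁻¹ • (-x₀ + y)) μ μ :=
    (Measure.quasiMeasurePreserving_smul μ (inv_ne_zero ht0)).comp
      (measurePreserving_add_left μ (-x₀)).quasiMeasurePreserving
  filter_upwards [hq.ae ht] with y hy
  apply hinj
  rwa [smul_inv_smul₀ ht0, add_neg_cancel_left] at hy

theorem Matrix.PosSemidef.one_lt_det_one_add {m : Type*} [Fintype m] [DecidableEq m]
    {P : Matrix m m ℝ} (hP : P.PosSemidef) (h0 : P ≠ 0) : 1 < (1 + P).det := by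
  have h1 : (1 + P).det = ∏ i, (1 + hP.1.eigenvalues i) := by
    have h := congrArg (Polynomial.eval (-1)) hP.1.charpoly_eq
    rw [Matrix.eval_charpoly, Polynomial.eval_prod] at h
    have h2 : (scalar m (-1 : ℝ) - P) = -(1 + P) := by
      ext i j; simp [Matrix.one_apply, Matrix.diagonal_apply]; split_ifs <;> ring
    rw [h2, Matrix.det_neg] at h
    have h3 : ∏ j, Polynomial.eval (-1 : ℝ) (Polynomial.X - Polynomial.C (hP.1.eigenvalues j : ℝ))
        = (-1) ^ Fintype.card m * ∏ i, (1 + hP.1.eigenvalues i) := by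
      rw [← Finset.card_univ, ← Finset.prod_const, ← Finset.prod_mul_distrib]
      exact Finset.prod_congr rfl fun i _ => by simp; ring
    have h4 := h.trans h3
    exact mul_left_cancel₀ (pow_ne_zero _ (by norm_num)) h4
  have h2 : 0 < P.trace := lt_of_le_of_ne hP.trace_nonneg
    (fun h => h0 (hP.trace_eq_zero_iff.1 h.symm))
  have h3 : P.trace = ∑ i, hP.1.eigenvalues i := hP.1.trace_eq_sum_eigenvalues
  obtain ⟨i, -, hi⟩ := Finset.exists_lt_of_sum_lt (s := Finset.univ) (f := fun _ : m => (0 : ℝ))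
    (g := hP.1.eigenvalues) (by simpa [← h3] using h2)
  rw [h1]
  calc (1 : ℝ) = ∏ _i : m, (1 : ℝ) := by simp
    _ < _ := Finset.prod_lt_prod (fun _ _ => one_pos)
      (fun j _ => by linarith [hP.eigenvalues_nonneg j]) ⟨i, Finset.mem_univ _, by linarith⟩

open scoped MatrixOrder in
theorem Matrix.PosDef.det_lt_det_add {m : Type*} [Fintype m] [DecidableEq m]
    {A K : Matrix m m ℝ} (hA : A.PosDef) (hK : K.PosSemidef) (h0 : K ≠ 0) :
    A.det < (A + K).det := by
  obtain ⟨C, hC⟩ := CStarAlgebra.nonneg_iff_eq_star_mul_self.1 hK.nonneg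
  have hu : A * A⁻¹ = 1 := Matrix.mul_nonsing_inv _ hA.det_pos.ne'.isUnit
  have h1 : A + K = A * (1 + A⁻¹ * star C * C) := by
    rw [mul_add, mul_one, mul_assoc, ← hC, ← mul_assoc, hu, one_mul]
  have h2 : 1 < (1 + C * (A⁻¹ * star C)).det := by
    have hP : (C * A⁻¹ * Cᴴ).PosSemidef := hA.inv.posSemidef.mul_mul_conjTranspose_same C
    rw [mul_assoc] at hP
    refine hP.one_lt_det_one_add fun hz => h0 ?_
    have hC0 : Cᴴ = 0 := by
      ext i j
      by_contra hne
      have hx : Cᴴ.col j ≠ 0 := fun h => hne (congrFun h i)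
      have := hA.inv.dotProduct_mulVec_pos hx
      have h5 : (C * (A⁻¹ * Cᴴ)) j j = star (Cᴴ.col j) ⬝ᵥ (A⁻¹ *ᵥ Cᴴ.col j) := by
        simp [Matrix.mul_apply, dotProduct, mulVec]
      rw [← h5, hz] at this
      simp at this
    rw [hC, Matrix.star_eq_conjTranspose, hC0, zero_mul]
  rw [h1, det_mul, Matrix.det_one_add_mul_comm]
  nlinarith [hA.det_pos]

/-- `K` is a nonzero positive semidefinite matrix in the linear span of the model of `G`
that annihilates the data matrix `X`. -/
def IsPSDStress {n d : ℕ} (G : SimpleGraph (Fin n)) (X : Fin n → Fin d → ℝ)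
    (K : Matrix (Fin n) (Fin n) ℝ) : Prop :=
  K.PosSemidef ∧ K ≠ 0 ∧ (∀ i j, i ≠ j → ¬ G.Adj i j → K i j = 0) ∧ K * Matrix.of X = 0

theorem IsPSDStress.not_exists_min {n d : ℕ} {G : SimpleGraph (Fin n)} {X : Fin n → Fin d → ℝ}
    {K : Matrix (Fin n) (Fin n) ℝ} (hK : IsPSDStress G X K) :
    ¬ ∃ K ∈ graphModel n G, ∀ K' ∈ graphModel n G,
        mlObjective (Matrix.of X * (Matrix.of X)ᵀ) K ≤
          mlObjective (Matrix.of X * (Matrix.of X)ᵀ) K' := by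
  rintro ⟨A, ⟨hA, hAG⟩, hmin⟩
  obtain ⟨hK1, hK0, hKG, hKX⟩ := hK
  have h := hmin (A + K) ⟨hA.add_posSemidef hK1, fun i j hij hG => by
    rw [Matrix.add_apply, hAG i j hij hG, hKG i j hij hG, add_zero]⟩
  have htr : (Matrix.of X * (Matrix.of X)ᵀ * K).trace = 0 := by
    rw [Matrix.trace_mul_comm, ← Matrix.mul_assoc, hKX, Matrix.zero_mul, Matrix.trace_zero]
  have hlog := Real.log_lt_log hA.det_pos (hA.det_lt_det_add hK1 hK0)
  rw [mlObjective, mlObjective, mul_add, Matrix.trace_add, htr] at h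
  linarith

theorem Matrix.PosSemidef.abs_apply_le_trace {m : Type*} [Fintype m] [DecidableEq m]
    {K : Matrix m m ℝ} (hK : K.PosSemidef) (i j : m) : |K i j| ≤ K.trace := by
  have hd : ∀ a, K a a ≤ K.trace := fun a =>
    Finset.single_le_sum (f := fun a => K a a) (fun b _ => hK.diag_nonneg) (Finset.mem_univ a)
  have hs : K j i = K i j := by simpa using hK.1.apply i j
  have h1 := hK.dotProduct_mulVec_nonneg (Pi.single i 1 + Pi.single j 1)
  have h2 := hK.dotProduct_mulVec_nonneg (Pi.single i 1 - Pi.single j 1)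
  simp [mulVec_add, mulVec_sub, Matrix.col_apply] at h1 h2
  rw [abs_le]
  constructor <;> linarith [hd i, hd j]

theorem Matrix.PosSemidef.det_le_trace_pow {n : ℕ}
    {K : Matrix (Fin n) (Fin n) ℝ} (hK : K.PosSemidef) : K.det ≤ K.trace ^ n := by
  have h1 : K.det = ∏ i, hK.1.eigenvalues i := hK.1.det_eq_prod_eigenvalues
  have h2 : K.trace = ∑ i, hK.1.eigenvalues i := hK.1.trace_eq_sum_eigenvalues
  have h3 : ∀ i, hK.1.eigenvalues i ≤ K.trace := fun i => h2 ▸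
    Finset.single_le_sum (fun b _ => hK.eigenvalues_nonneg b) (Finset.mem_univ i)
  rw [h1]
  calc _ ≤ ∏ _i : Fin n, K.trace :=
        Finset.prod_le_prod (fun i _ => hK.eigenvalues_nonneg i) fun i _ => h3 i
    _ = _ := by simp

theorem Matrix.isClosed_posSemidef {m : Type*} [Fintype m] :
    IsClosed {K : Matrix m m ℝ | K.PosSemidef} := by
  have : {K : Matrix m m ℝ | K.PosSemidef} =
      {K | Kᴴ = K} ∩ ⋂ x : m → ℝ, {K | 0 ≤ star x ⬝ᵥ (K *ᵥ x)} := by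
    ext K
    simp [Matrix.posSemidef_iff_dotProduct_mulVec, Matrix.IsHermitian]
  rw [this]
  refine (isClosed_eq (by fun_prop) continuous_id).inter (isClosed_iInter fun x => ?_)
  exact isClosed_le continuous_const (by fun_prop)

theorem isCompact_posSemidef_trace_le {n : ℕ} (G : SimpleGraph (Fin n)) (T : ℝ) :
    IsCompact {K : Matrix (Fin n) (Fin n) ℝ | K.PosSemidef ∧
      (∀ i j, i ≠ j → ¬ G.Adj i j → K i j = 0) ∧ K.trace ≤ T} := by
  have hbox : IsCompact (Set.pi Set.univ fun _ : Fin n => Set.pi Set.univ fun _ : Fin n =>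
      Set.Icc (-T) T) := isCompact_univ_pi fun _ => isCompact_univ_pi fun _ => isCompact_Icc
  refine hbox.of_isClosed_subset ?_ ?_
  · have h2 : IsClosed {K : Matrix (Fin n) (Fin n) ℝ |
        ∀ i j, i ≠ j → ¬ G.Adj i j → K i j = 0} := by
      simp only [Set.ofPred_forall]
      exact isClosed_iInter fun i => isClosed_iInter fun j => isClosed_iInter fun _ =>
        isClosed_iInter fun _ => isClosed_eq (by fun_prop) continuous_const
    have h3 : IsClosed {K : Matrix (Fin n) (Fin n) ℝ | K.trace ≤ T} :=
      isClosed_le (by fun_prop) continuous_const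
    exact Matrix.isClosed_posSemidef.inter (h2.inter h3)
  · rintro K ⟨hK, -, hT⟩ i - j -
    exact abs_le.1 ((hK.abs_apply_le_trace i j).trans hT)

theorem Matrix.PosSemidef.trace_conj_eq_zero {n d : ℕ} {K : Matrix (Fin n) (Fin n) ℝ}
    (hK : K.PosSemidef) (Y : Matrix (Fin n) (Fin d) ℝ) (h : (Y * Yᵀ * K).trace = 0) :
    K * Y = 0 := by
  rw [Matrix.trace_mul_comm, ← Matrix.mul_assoc, Matrix.trace_mul_comm, ← Matrix.mul_assoc] at h
  have hP : (Yᵀ * K * Y).PosSemidef := hK.conjTranspose_mul_mul_same Y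
  have h0 := hP.trace_eq_zero_iff.1 h
  ext i j
  have h1 : star (Y.col j) ⬝ᵥ K *ᵥ Y.col j = 0 := by
    have := congrFun (congrFun h0 j) j
    rw [Matrix.mul_assoc] at this
    simpa [Matrix.mul_apply, dotProduct, mulVec] using this
  have := congrFun ((hK.dotProduct_mulVec_zero_iff _).1 h1) i
  simpa [Matrix.mul_apply, dotProduct, mulVec] using this

theorem trace_gram_mul_nonneg {n d : ℕ} {K : Matrix (Fin n) (Fin n) ℝ}
    (hK : K.PosSemidef) (Y : Matrix (Fin n) (Fin d) ℝ) : 0 ≤ (Y * Yᵀ * K).trace := by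
  rw [Matrix.trace_mul_comm, ← Matrix.mul_assoc, Matrix.trace_mul_comm, ← Matrix.mul_assoc]
  exact (hK.conjTranspose_mul_mul_same Y).trace_nonneg

theorem exists_pos_mul_trace_le {n d : ℕ} {G : SimpleGraph (Fin n)} {X : Fin n → Fin d → ℝ}
    (h : ∀ K, ¬ IsPSDStress G X K) :
    ∃ c : ℝ, 0 < c ∧ ∀ K : Matrix (Fin n) (Fin n) ℝ, K.PosSemidef →
      (∀ i j, i ≠ j → ¬ G.Adj i j → K i j = 0) →
      c * K.trace ≤ (Matrix.of X * (Matrix.of X)ᵀ * K).trace := by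
  set S := Matrix.of X * (Matrix.of X)ᵀ with hS
  let C : Set (Matrix (Fin n) (Fin n) ℝ) := {K | K.PosSemidef ∧
      (∀ i j, i ≠ j → ¬ G.Adj i j → K i j = 0) ∧ K.trace ≤ 1} ∩ {K | K.trace = 1}
  have hC : IsCompact C := (isCompact_posSemidef_trace_le G 1).inter_right
    (isClosed_eq (by fun_prop) continuous_const)
  have hpos : ∀ K ∈ C, 0 < (S * K).trace := by
    rintro K ⟨⟨hK, hG, -⟩, h1⟩
    refine lt_of_le_of_ne (trace_gram_mul_nonneg hK _) fun h0 => h K ⟨hK, ?_, hG, ?_⟩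
    · rintro rfl; simp at h1
    · exact hK.trace_conj_eq_zero _ h0.symm
  obtain ⟨c, hc, hcC⟩ : ∃ c : ℝ, 0 < c ∧ ∀ K ∈ C, c ≤ (S * K).trace := by
    rcases C.eq_empty_or_nonempty with he | hne
    · exact ⟨1, one_pos, by simp [he]⟩
    · obtain ⟨K, hK, hmin⟩ := hC.exists_isMinOn hne
        (f := fun K => (S * K).trace) (by fun_prop)
      exact ⟨_, hpos K hK, fun K' hK' => hmin hK'⟩
  refine ⟨c, hc, fun K hK hG => ?_⟩
  rcases hK.trace_nonneg.eq_or_lt with h0 | h0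
  · rw [← h0, mul_zero]
    exact trace_gram_mul_nonneg hK _
  · have := hcC (K.trace⁻¹ • K) ⟨⟨hK.smul (inv_nonneg.2 h0.le), fun i j hij hij' => by
      simp [hG i j hij hij'], by simp [h0.ne']⟩, by simp [h0.ne']⟩
    rw [mul_smul_comm, Matrix.trace_smul, smul_eq_mul, inv_mul_eq_div, le_div_iff₀ h0] at this
    exact this

open Filter in
theorem exists_min_of_no_psdStress {n d : ℕ} {G : SimpleGraph (Fin n)} {X : Fin n → Fin d → ℝ}
    (h : ∀ K, ¬ IsPSDStress G X K) :
    ∃ K ∈ graphModel n G, ∀ K' ∈ graphModel n G,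
        mlObjective (Matrix.of X * (Matrix.of X)ᵀ) K ≤
          mlObjective (Matrix.of X * (Matrix.of X)ᵀ) K' := by
  obtain ⟨c, hc, hcK⟩ := exists_pos_mul_trace_le h
  set S := Matrix.of X * (Matrix.of X)ᵀ with hS
  set f₁ := mlObjective S 1 with hf₁
  obtain ⟨T, hT⟩ : ∃ T : ℝ, 0 < T ∧ ∀ t, T < t → f₁ < c * t - n * Real.log t := by
    have h1 : Tendsto (fun t : ℝ => c * t - n * Real.log t) atTop atTop := by
      have hlo : (fun t : ℝ => n * Real.log t) =o[atTop] fun t : ℝ => c * t :=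
        (Real.isLittleO_log_id_atTop.const_mul_left _).trans_isTheta
          ((Asymptotics.isTheta_refl _ _).const_mul_right hc.ne')
      have := (Asymptotics.IsEquivalent.refl (u := fun t : ℝ => c * t)).sub_isLittleO hlo
      exact this.symm.tendsto_atTop (tendsto_id.const_mul_atTop hc)
    obtain ⟨T, hT⟩ := ((h1.eventually_gt_atTop f₁).and (eventually_gt_atTop 0)).exists_forall_of_atTop
    exact ⟨T, (hT T le_rfl).2, fun t ht => (hT t ht.le).1⟩
  let Q : Set (Matrix (Fin n) (Fin n) ℝ) := {K | K.PosSemidef ∧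
      (∀ i j, i ≠ j → ¬ G.Adj i j → K i j = 0) ∧ K.trace ≤ T} ∩ {K | Real.exp (-f₁) ≤ K.det}
  have hQc : IsCompact Q := (isCompact_posSemidef_trace_le G T).inter_right
    (isClosed_le continuous_const (by fun_prop))
  have hmemQ : ∀ K ∈ graphModel n G, mlObjective S K ≤ f₁ → K ∈ Q := by
    rintro K ⟨hK, hG⟩ hle
    have hlogle : Real.log K.det ≤ n * Real.log K.trace := by
      rw [← Real.log_pow]
      exact Real.log_le_log hK.det_pos hK.posSemidef.det_le_trace_pow
    have h1 := hcK K hK.posSemidef hG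
    have h2 : 0 ≤ (S * K).trace := trace_gram_mul_nonneg hK.posSemidef _
    rw [mlObjective] at hle
    refine ⟨⟨hK.posSemidef, hG, ?_⟩, ?_⟩
    · by_contra hlt
      have := hT.2 _ (not_le.1 hlt)
      linarith
    · rw [Set.mem_ofPred_eq, ← Real.le_log_iff_exp_le hK.det_pos]
      linarith
  have hQsub : ∀ K ∈ Q, K ∈ graphModel n G := by
    rintro K ⟨⟨hK, hG, -⟩, hd⟩
    exact ⟨hK.posDef_iff_det_ne_zero.2 ((Real.exp_pos _).trans_le hd).ne', hG⟩
  have h1G : (1 : Matrix (Fin n) (Fin n) ℝ) ∈ graphModel n G :=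
    ⟨Matrix.PosDef.one, fun i j hij _ => Matrix.one_apply_ne hij⟩
  have h1Q := hmemQ 1 h1G le_rfl
  have hcont : ContinuousOn (mlObjective S) Q := by
    have : Continuous fun K : Matrix (Fin n) (Fin n) ℝ => (S * K).trace := by fun_prop
    refine this.continuousOn.sub (ContinuousOn.log (by fun_prop) fun K hK => ?_)
    exact ((Real.exp_pos _).trans_le hK.2).ne'
  obtain ⟨K, hK, hmin⟩ := hQc.exists_isMinOn ⟨1, h1Q⟩ hcont
  refine ⟨K, hQsub K hK, fun K' hK' => ?_⟩
  by_cases hle : mlObjective S K' ≤ f₁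
  · exact hmin (hmemQ K' hK' hle)
  · exact (hmin h1Q).trans (not_le.1 hle).le

/-- The linear span of the Gaussian graphical model of `G`: symmetric matrices whose off-diagonal
entries vanish at non-edges. -/
def stressSpace {n : ℕ} (G : SimpleGraph (Fin n)) :
    Submodule ℝ (Matrix (Fin n) (Fin n) ℝ) where
  carrier := {K | (∀ i j, K i j = K j i) ∧ ∀ i j, i ≠ j → ¬ G.Adj i j → K i j = 0}
  add_mem' := by
    rintro A B ⟨hA, hA'⟩ ⟨hB, hB'⟩
    exact ⟨fun i j => by simp [hA i j, hB i j], fun i j h h' => by simp [hA' i j h h', hB' i j h h']⟩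
  zero_mem' := by simp
  smul_mem' := by
    rintro c A ⟨hA, hA'⟩
    exact ⟨fun i j => by simp [hA i j], fun i j h h' => by simp [hA' i j h h']⟩

/-- The edges of `G`, each listed once. -/
abbrev EdgePair {n : ℕ} (G : SimpleGraph (Fin n)) : Type :=
  {e : Fin n × Fin n // G.Adj e.1 e.2 ∧ e.1 < e.2}

noncomputable instance {n : ℕ} (G : SimpleGraph (Fin n)) : Fintype (EdgePair G) :=
  Fintype.ofFinite _

theorem sum_smul_rigidityVec {n d : ℕ} {G : SimpleGraph (Fin n)} {K : Matrix (Fin n) (Fin n) ℝ}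
    (hK : K ∈ stressSpace G) (p : Fin n → Fin d → ℝ) (i : Fin n) :
    (∑ e : EdgePair G, K e.1.1 e.1.2 • rigidityVec p e.1.1 e.1.2) i
      = ∑ j, K i j • (p i - p j) := by
  classical
  have h1 : (∑ e : EdgePair G, K e.1.1 e.1.2 • rigidityVec p e.1.1 e.1.2) i
      = ∑ e : Fin n × Fin n, if e.1 < e.2 then K e.1 e.2 • rigidityVec p e.1 e.2 i else 0 := by
    rw [Finset.sum_apply, ← Finset.sum_filter, ← Finset.sum_subset (s₁ := Finset.univ.filter
      fun e : Fin n × Fin n => G.Adj e.1 e.2 ∧ e.1 < e.2)]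
    · exact (Finset.sum_subtype (Finset.univ.filter
        fun e : Fin n × Fin n => G.Adj e.1 e.2 ∧ e.1 < e.2) (by simp)
        fun e => K e.1 e.2 • rigidityVec p e.1 e.2 i).symm
    · intro e; simp
    · rintro ⟨a, b⟩ hab hnot
      simp only [Finset.mem_filter, Finset.mem_univ, true_and] at hab hnot
      rw [hK.2 a b hab.ne fun h => hnot ⟨h, hab⟩, zero_smul]
  have h2 : ∀ a b : Fin n, (if a < b then K a b • rigidityVec p a b i else 0)
      = (if a = i then (if i < b then K i b • (p i - p b) else 0) else 0)
        + (if b = i then (if a < i then K i a • (p i - p a) else 0) else 0) := by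
    intro a b
    by_cases hai : a = i
    · subst hai
      by_cases hb : b = a
      · subst hb; simp
      · simp [rigidityVec, hb]
    · by_cases hb : b = i
      · subst hb
        simp [rigidityVec, hai, Ne.symm hai, hK.1 a b]
      · simp [rigidityVec, hai, hb, Ne.symm hai, Ne.symm hb]
  rw [h1, Fintype.sum_prod_type]
  simp only [h2, Finset.sum_add_distrib]
  rw [Finset.sum_comm (f := fun a b => if b = i then
    (if a < i then K i a • (p i - p a) else 0) else 0)]
  simp only [Finset.sum_ite_irrel, Finset.sum_const_zero, Finset.sum_ite_eq', Finset.mem_univ,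
    if_true]
  rw [← Finset.sum_add_distrib]
  refine Finset.sum_congr rfl fun j _ => ?_
  rcases lt_trichotomy i j with h | h | h
  · simp [h, h.not_gt]
  · simp [h]
  · simp [h, h.not_gt]

theorem eq_zero_of_linearIndependent_rigidityVec {n d : ℕ} {G : SimpleGraph (Fin n)}
    {p : Fin n → Fin d → ℝ}
    (hp : LinearIndependent ℝ fun e : EdgePair G => rigidityVec p e.1.1 e.1.2)
    {K : Matrix (Fin n) (Fin n) ℝ} (hK : K ∈ stressSpace G) (h1 : ∀ i, ∑ j, K i j = 0)
    (h2 : ∀ i l, ∑ j, K i j * p j l = 0) : K = 0 := by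
  have h0 : ∑ e : EdgePair G, K e.1.1 e.1.2 • rigidityVec p e.1.1 e.1.2 = 0 := by
    ext i l
    rw [sum_smul_rigidityVec hK]
    simp [mul_sub, Finset.sum_sub_distrib, ← Finset.sum_mul, h1, h2]
  have hlt : ∀ i j, i < j → K i j = 0 := by
    intro i j hij
    by_cases hG : G.Adj i j
    · exact Fintype.linearIndependent_iff.1 hp _ h0 ⟨(i, j), hG, hij⟩
    · exact hK.2 i j hij.ne hG
  have hne : ∀ i j, i ≠ j → K i j = 0 := by
    intro i j hij
    rcases hij.lt_or_gt with h | h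
    · exact hlt i j h
    · rw [hK.1, hlt j i h]
  ext i j
  by_cases hij : i = j
  · subst hij
    have := h1 i
    rwa [Finset.sum_eq_single i (fun b _ hb => hne i b hb.symm) (by simp)] at this
  · exact hne i j hij

theorem linearIndependent_rigidityVec {n d : ℕ} {G : SimpleGraph (Fin n)}
    {p : Fin n → Fin d → ℝ}
    (hp : ∀ K ∈ stressSpace G, (∀ i, ∑ j, K i j = 0) → (∀ i l, ∑ j, K i j * p j l = 0) → K = 0) :
    LinearIndependent ℝ fun e : EdgePair G => rigidityVec p e.1.1 e.1.2 := by
  classical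
  rw [Fintype.linearIndependent_iff]
  intro ω hω
  let W : Fin n → Fin n → ℝ := fun i j =>
    if h : G.Adj i j ∧ i < j then ω ⟨(i, j), h⟩ else
      if h : G.Adj j i ∧ j < i then ω ⟨(j, i), h⟩ else 0
  have hWs : ∀ i j, W i j = W j i := by
    intro i j
    simp only [W]
    split_ifs with h h' h'
    · exact absurd h.2 h'.2.not_gt
    all_goals rfl
  have hWG : ∀ i j, ¬ G.Adj i j → W i j = 0 := by
    intro i j h
    have h' : ¬ G.Adj j i := fun h' => h h'.symm
    simp [W, h, h']
  let K : Matrix (Fin n) (Fin n) ℝ := fun i j => if i = j then - ∑ l, W i l else W i j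
  have hWd : ∀ i, W i i = 0 := fun i => hWG i i (G.irrefl)
  have hKW : ∀ i j, i ≠ j → K i j = W i j := fun i j h => if_neg h
  have hK : K ∈ stressSpace G := by
    refine ⟨fun i j => ?_, fun i j h h' => by rw [hKW i j h, hWG i j h']⟩
    by_cases h : i = j
    · rw [h]
    · rw [hKW i j h, hKW j i (Ne.symm h), hWs]
  have hKe : ∀ e : EdgePair G, K e.1.1 e.1.2 = ω e := by
    rintro ⟨⟨a, b⟩, h⟩
    rw [hKW _ _ h.2.ne]
    exact dif_pos h
  have hsum : ∀ i, ∑ j, K i j = 0 := by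
    intro i
    have : ∀ j, K i j = W i j + if i = j then - ∑ l, W i l else 0 := by
      intro j
      by_cases h : i = j
      · subst h; simp [K, hWd]
      · simp [K, h]
    simp [this, Finset.sum_add_distrib]
  have h0 : ∀ i l, ∑ j, K i j * p j l = 0 := by
    intro i l
    have h := congrFun (sum_smul_rigidityVec hK p i) l
    simp only [hKe, hω] at h
    simpa [mul_sub, Finset.sum_sub_distrib, ← Finset.sum_mul, hsum] using h.symm
  intro e
  rw [← hKe e, hp K hK hsum h0]
  rfl

instance isAddHaarMeasure_volume_pi_pi (n d : ℕ) :
    (volume : Measure (Fin n → Fin d → ℝ)).IsAddHaarMeasure :=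
  haveI := isAddHaarMeasure_volume_pi (Fin d)
  Measure.pi.isAddHaarMeasure fun _ : Fin n => (volume : Measure (Fin d → ℝ))

theorem isIndepGraph_of_exists {n d : ℕ} {G : SimpleGraph (Fin n)} (p : Fin n → Fin d → ℝ)
    (hp : ∀ K ∈ stressSpace G, (∀ i, ∑ j, K i j = 0) → (∀ i l, ∑ j, K i j * p j l = 0) → K = 0) :
    IsIndepGraph d G := by
  let L : (Fin n → Fin d → ℝ) →ₗ[ℝ] (EdgePair G → ℝ) →ₗ[ℝ] (Fin n → Fin d → ℝ) :=
    LinearMap.mk₂ ℝ (fun p ω => ∑ e : EdgePair G, ω e • rigidityVec p e.1.1 e.1.2)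
      (by
        intro p q ω
        rw [← Finset.sum_add_distrib]
        refine Finset.sum_congr rfl fun e _ => ?_
        rw [← smul_add]; congr 1; ext k l
        simp only [rigidityVec, Pi.add_apply]
        split_ifs <;> simp <;> ring)
      (by
        intro c p ω
        rw [Finset.smul_sum]
        refine Finset.sum_congr rfl fun e _ => ?_
        rw [smul_comm]; congr 1; ext k l
        simp only [rigidityVec, Pi.smul_apply]
        split_ifs <;> simp <;> ring)
      (by intro p ω ω'; simp [add_smul, Finset.sum_add_distrib])
      (by intro c p ω; simp [mul_smul, Finset.smul_sum])
  have hL : ∀ p, Function.Injective (L p) ↔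
      LinearIndependent ℝ fun e : EdgePair G => rigidityVec p e.1.1 e.1.2 := by
    intro p
    rw [Fintype.linearIndependent_iff, injective_iff_map_eq_zero]
    exact ⟨fun h ω hω e => congrFun (h ω hω) e, fun h ω hω => funext fun e => h ω hω e⟩
  have := ae_injective_of_injective volume L p ((hL p).2 (linearIndependent_rigidityVec hp))
  exact this.mono fun q hq => (hL q).1 hq

theorem ae_no_psdStress {n d : ℕ} {G : SimpleGraph (Fin n)} (h : IsIndepGraph d G) :
    ∀ᵐ X : Fin n → Fin (d + 1) → ℝ ∂volume, ∀ K, ¬ IsPSDStress G X K := by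
  obtain ⟨p, hp⟩ := Filter.Eventually.exists h
  let L : (Fin n → Fin (d + 1) → ℝ) →ₗ[ℝ] stressSpace G →ₗ[ℝ] Matrix (Fin n) (Fin (d + 1)) ℝ :=
    LinearMap.mk₂ ℝ (fun X K => K.1 * Matrix.of X)
      (fun X Y K => Matrix.mul_add _ _ _) (fun c X K => Matrix.mul_smul K.1 c (Matrix.of X))
      (fun X K K' => Matrix.add_mul _ _ _) (fun c X K => Matrix.smul_mul _ _ _)
  have hinj : Function.Injective (L fun i => Fin.cons 1 (p i)) := by
    rw [injective_iff_map_eq_zero]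
    rintro ⟨K, hK⟩ h0
    have h0' : ∀ i l, ∑ j, K i j * (Fin.cons 1 (p j) : Fin (d + 1) → ℝ) l = 0 := fun i l =>
      congrFun (congrFun h0 i) l
    exact Subtype.ext (eq_zero_of_linearIndependent_rigidityVec hp hK
      (fun i => by simpa using h0' i 0) fun i l => by simpa using h0' i l.succ)
  filter_upwards [ae_injective_of_injective volume L _ hinj] with X hX
  rintro K ⟨hK, hK0, hKG, hKX⟩
  have hmem : K ∈ stressSpace G := ⟨fun i j => by simpa using hK.1.apply j i, hKG⟩
  exact hK0 (congrArg Subtype.val ((injective_iff_map_eq_zero _).1 hX ⟨K, hmem⟩ hKX))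

theorem exists_fin_forall_mem_mulVec_eq_zero {n k : ℕ} (U : Submodule ℝ (Fin n → ℝ))
    (hU : Module.finrank ℝ U ≤ k) : ∃ p : Fin n → Fin k → ℝ, ∀ K : Matrix (Fin n) (Fin n) ℝ,
      (∀ i l, ∑ j, K i j * p j l = 0) → ∀ u ∈ U, K *ᵥ u = 0 := by
  let b := Module.finBasis ℝ U
  refine ⟨fun j l => if h : l.1 < Module.finrank ℝ U then (b ⟨l.1, h⟩ : Fin n → ℝ) j else 0,
    fun K hK u hu => ?_⟩
  have hb : ∀ l, K *ᵥ (b l : Fin n → ℝ) = 0 := by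
    intro l
    ext i
    have := hK i ⟨l.1, l.2.trans_le hU⟩
    simpa [mulVec, dotProduct] using this
  have h1 : u = ∑ l, b.repr ⟨u, hu⟩ l • (b l : Fin n → ℝ) := by
    have := congrArg Subtype.val (b.sum_repr ⟨u, hu⟩)
    rw [Submodule.coe_sum] at this
    exact this.symm
  rw [h1, mulVec_sum]
  exact Finset.sum_eq_zero fun l _ => by rw [mulVec_smul, hb, smul_zero]

/-- A criterion for independence in terms of a Gale dual configuration `N` of dimension `r`. -/
theorem isIndepGraph_of_gale {n k r : ℕ} {G : SimpleGraph (Fin n)} (hk : n ≤ k + 1 + r)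
    (N : Fin n → Fin r → ℝ) (hsum : ∑ i, N i = 0) (s : Fin r → Fin n)
    (hs : ∀ b, N (s b) = Pi.single b 1)
    (hA : ∀ K ∈ stressSpace G,
      (∀ i j, K i j = ∑ a, ∑ b, N i a * N j b * K (s a) (s b)) → ∀ a b, K (s a) (s b) = 0) :
    IsIndepGraph k G := by
  rcases Nat.eq_zero_or_pos n with rfl | hn
  · exact isIndepGraph_of_exists (fun _ _ => 0) fun K _ _ _ => Subsingleton.elim _ _
  let i₀ : Fin n := ⟨0, hn⟩
  let φ : (Fin n → ℝ) →ₗ[ℝ] (Fin r → ℝ) := (Matrix.of N)ᵀ.mulVecLin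
  have hφ : ∀ u c, φ u c = ∑ i, N i c * u i := fun u c => rfl
  have hsurj : Function.Surjective φ := by
    intro w
    refine ⟨∑ b, w b • Pi.single (s b) 1, ?_⟩
    rw [map_sum]
    ext c
    simp [hφ, hs, Pi.single_apply]
  let U := LinearMap.ker φ
  let U' := U ⊓ LinearMap.ker (LinearMap.proj (R := ℝ) (φ := fun _ : Fin n => ℝ) i₀)
  have h1U : (1 : Fin n → ℝ) ∈ U := by
    rw [LinearMap.mem_ker]
    ext c
    simpa [hφ] using congrFun hsum c
  have hlt : U' < U := lt_of_le_of_ne inf_le_left fun h => by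
    have : (1 : Fin n → ℝ) ∈ U' := h ▸ h1U
    simpa using this.2
  have hfin : Module.finrank ℝ U' ≤ k := by
    have h1 := Submodule.finrank_lt_finrank_of_lt hlt
    have h2 := φ.finrank_range_add_finrank_ker
    rw [LinearMap.range_eq_top.2 hsurj] at h2
    simp only [finrank_top, Module.finrank_fin_fun] at h2
    change r + Module.finrank ℝ U = n at h2
    omega
  obtain ⟨p, hp⟩ := exists_fin_forall_mem_mulVec_eq_zero U' hfin
  refine isIndepGraph_of_exists p fun K hK h1 h2 => ?_
  have hKU : ∀ u ∈ U, K *ᵥ u = 0 := by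
    intro u hu
    have h3 := hp K h2 (u - u i₀ • 1) ⟨U.sub_mem hu (U.smul_mem _ h1U), by simp⟩
    have h4 : K *ᵥ (1 : Fin n → ℝ) = 0 := by
      ext i; simpa [mulVec, dotProduct] using h1 i
    rwa [mulVec_sub, mulVec_smul, h4, smul_zero, sub_zero] at h3
  have hcol : ∀ i j, K i j = ∑ b, N j b * K i (s b) := by
    intro i j
    have hmem : Pi.single j 1 - ∑ b, N j b • Pi.single (s b) (1 : ℝ) ∈ U := by
      rw [LinearMap.mem_ker, map_sub, map_sum]
      ext c
      simp [hφ, hs, Pi.single_apply]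
    have h5 := congrFun (hKU _ hmem) i
    rw [mulVec_sub, mulVec_sum] at h5
    simp [mulVec_smul] at h5
    linarith
  have hrep : ∀ i j, K i j = ∑ a, ∑ b, N i a * N j b * K (s a) (s b) := by
    intro i j
    rw [hcol i j, Finset.sum_comm]
    refine Finset.sum_congr rfl fun b _ => ?_
    rw [hK.1 i (s b), hcol (s b) i, Finset.mul_sum]
    exact Finset.sum_congr rfl fun a _ => by rw [hK.1 (s b) (s a)]; ring
  have h0 := hA K hK hrep
  ext i j
  rw [hrep i j]
  simp [h0]

/-- Data matrices with a nonzero positive semidefinite stress fill a nonempty open set. -/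
def HasOpenStress {n : ℕ} (G : SimpleGraph (Fin n)) (k : ℕ) : Prop :=
  ∃ X₀ : Fin n → Fin k → ℝ, ∀ᶠ X in nhds X₀, ∃ K, IsPSDStress G X K

theorem exists_supported_fullRank {n k r : ℕ} (S : Finset (Fin n)) (hS : k + r ≤ S.card)
    (N : Matrix (Fin n) (Fin r) ℝ) : ∃ X : Matrix (Fin n) (Fin k) ℝ,
      (∀ i ∉ S, ∀ l, X i l = 0) ∧ Xᵀ * N = 0 ∧ (Xᵀ * X).det ≠ 0 := by
  let ψ : (S → ℝ) →ₗ[ℝ] (Fin r → ℝ) := (N.submatrix (Subtype.val : S → Fin n) id)ᵀ.mulVecLin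
  have hψ : ∀ u c, ψ u c = ∑ i : S, N i c * u i := fun u c => rfl
  have hfin : k ≤ Module.finrank ℝ (LinearMap.ker ψ) := by
    have h1 := ψ.finrank_range_add_finrank_ker
    have h2 := Submodule.finrank_le (LinearMap.range ψ)
    simp at h1 h2
    omega
  let b := Module.finBasis ℝ (LinearMap.ker ψ)
  let x : Fin k → S → ℝ := fun l => b (Fin.castLE hfin l)
  have hx : LinearIndependent ℝ x :=
    (b.linearIndependent.map' (LinearMap.ker ψ).subtype (Submodule.ker_subtype _)).comp _
      (Fin.castLE_injective hfin)
  let X : Matrix (Fin n) (Fin k) ℝ := fun i l => if h : i ∈ S then x l ⟨i, h⟩ else 0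
  have hXS : ∀ (i : S) l, X i l = x l i := fun i l => dif_pos i.2
  have hX0 : ∀ i ∉ S, ∀ l, X i l = 0 := fun i hi l => dif_neg hi
  refine ⟨X, hX0, ?_, ?_⟩
  · ext l c
    have h1 : ψ (x l) c = 0 := congrFun (b (Fin.castLE hfin l)).2 c
    rw [hψ] at h1
    rw [Matrix.mul_apply, Matrix.zero_apply, ← h1]
    symm
    calc ∑ i : S, N i c * x l i = ∑ i : S, (X i l * N i c) :=
          Finset.sum_congr rfl fun i _ => by rw [hXS]; ring
      _ = ∑ i ∈ S, X i l * N i c := Finset.sum_coe_sort S fun i => X i l * N i c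
      _ = ∑ i, X i l * N i c :=
          Finset.sum_subset (Finset.subset_univ S) fun i _ hi => by rw [hX0 i hi, zero_mul]
  · have hinj : Function.Injective X.mulVec := by
      refine (injective_iff_map_eq_zero X.mulVecLin).2 fun v hv => ?_
      refine funext (Fintype.linearIndependent_iff.1 hx v ?_)
      ext i
      have := congrFun hv i.1
      simp only [mulVecLin_apply, mulVec, dotProduct, hXS] at this
      simpa [mul_comm] using this
    exact (Matrix.PosDef.conjTranspose_mul_self X hinj).det_pos.ne'

theorem hasOpenStress_of_eventually {n k r : ℕ} {G : SimpleGraph (Fin n)} (S : Finset (Fin n))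
    (hS : k + r ≤ S.card) (N₀ : Matrix (Fin n) (Fin r) ℝ) (hN₀ : ∀ i ∉ S, N₀ i = 0)
    (h : ∀ᶠ N : Matrix (Fin n) (Fin r) ℝ in nhds N₀, ∃ A : Matrix (Fin r) (Fin r) ℝ, A.PosSemidef ∧
      (∃ i, N i ⬝ᵥ A *ᵥ N i ≠ 0) ∧
      ∀ i ∈ S, ∀ j ∈ S, i ≠ j → ¬ G.Adj i j → N i ⬝ᵥ A *ᵥ N j = 0) :
    HasOpenStress G k := by
  obtain ⟨X₀, hX₀S, hX₀N, hX₀d⟩ := exists_supported_fullRank S hS N₀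
  let Y : (Fin n → Fin k → ℝ) → Matrix (Fin n) (Fin k) ℝ := fun X i l => if i ∈ S then X i l else 0
  have hYc : Continuous Y := by
    refine continuous_pi fun i => continuous_pi fun l => ?_
    by_cases hi : i ∈ S
    · simp only [Y, hi, if_true]; fun_prop
    · simp only [Y, hi, if_false]; fun_prop
  have hY₀ : Y X₀ = X₀ := by
    ext i l
    by_cases hi : i ∈ S
    · simp [Y, hi]
    · simp [Y, hi, hX₀S i hi l]
  let Γ : (Fin n → Fin k → ℝ) → Matrix (Fin k) (Fin k) ℝ := fun X => (Y X)ᵀ * Y X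
  have hΓc : Continuous Γ := by fun_prop
  let N : (Fin n → Fin k → ℝ) → Matrix (Fin n) (Fin r) ℝ := fun X =>
    N₀ - (Γ X).det⁻¹ • (Y X * ((Γ X).adjugate * ((Y X)ᵀ * N₀)))
  have hΓ₀ : (Γ X₀).det ≠ 0 := by simpa only [Γ, hY₀] using hX₀d
  have hN₀' : N X₀ = N₀ := by
    simp only [N, hY₀]
    erw [hX₀N]
    simp
  have hNc : ContinuousAt N X₀ := by
    refine continuousAt_const.sub (Filter.Tendsto.smul ?_ ?_)
    · exact (hΓc.matrix_det.continuousAt).inv₀ hΓ₀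
    · exact Continuous.continuousAt (hYc.matrix_mul
        (hΓc.matrix_adjugate.matrix_mul (hYc.matrix_transpose.matrix_mul continuous_const)))
  have hev : ∀ᶠ X in nhds X₀, (Γ X).det ≠ 0 :=
    hΓc.matrix_det.continuousAt.eventually_ne hΓ₀
  have hN := hNc.tendsto
  rw [hN₀'] at hN
  refine ⟨X₀, ?_⟩
  filter_upwards [hev, hN.eventually h] with X hX hA
  obtain ⟨A, hApos, ⟨i₁, hi₁⟩, hAG⟩ := hA
  have hNS : ∀ i ∉ S, N X i = 0 := by
    intro i hi
    ext c
    have h1 : (Y X * ((Γ X).adjugate * ((Y X)ᵀ * N₀))) i c = 0 := by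
      rw [Matrix.mul_apply]
      exact Finset.sum_eq_zero fun l _ => by simp [Y, hi]
    simp [N, hN₀ i hi, h1]
  have hYN : (Y X)ᵀ * N X = 0 := by
    simp only [N]
    rw [Matrix.mul_sub, Matrix.mul_smul, ← Matrix.mul_assoc (Y X)ᵀ (Y X), ← Matrix.mul_assoc,
      show (Y X)ᵀ * Y X = Γ X from rfl, Matrix.mul_adjugate, Matrix.smul_mul, Matrix.one_mul,
      smul_smul, inv_mul_cancel₀ hX, one_smul, sub_self]
  have hXN : (N X)ᵀ * Matrix.of X = 0 := by
    have h1 : (N X)ᵀ * Matrix.of X = ((Y X)ᵀ * N X)ᵀ := by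
      rw [Matrix.transpose_mul, Matrix.transpose_transpose]
      ext c l
      simp only [Matrix.mul_apply, Matrix.transpose_apply]
      refine Finset.sum_congr rfl fun i _ => ?_
      by_cases hi : i ∈ S
      · simp [Y, hi]
      · simp [hNS i hi]
    rw [h1, hYN, Matrix.transpose_zero]
  have hKij : ∀ i j, (N X * A * (N X)ᵀ) i j = N X i ⬝ᵥ A *ᵥ N X j := by
    intro i j
    rw [Matrix.mul_assoc]
    simp [Matrix.mul_apply, dotProduct, mulVec]
  refine ⟨N X * A * (N X)ᵀ, hApos.mul_mul_conjTranspose_same (N X), ?_, ?_, ?_⟩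
  · intro h0
    exact hi₁ (by rw [← hKij, h0, Matrix.zero_apply])
  · intro i j hij hG
    rw [hKij]
    by_cases hi : i ∈ S
    · by_cases hj : j ∈ S
      · exact hAG i hi j hj hij hG
      · simp [hNS j hj]
    · simp [hNS i hi]
  · rw [Matrix.mul_assoc, hXN, Matrix.mul_zero]

theorem eventually_posDef_nhds_one (r : ℕ) :
    ∀ᶠ A : Matrix (Fin r) (Fin r) ℝ in nhds 1, A.IsHermitian → A.PosDef := by
  have h := (isCompact_sphere (0 : Fin r → ℝ) 1).eventually_forall_of_forall_eventually
    (x₀ := (1 : Matrix (Fin r) (Fin r) ℝ)) (P := fun A x => 0 < x ⬝ᵥ A *ᵥ x) (by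
      intro x hx
      have hc : Continuous fun z : Matrix (Fin r) (Fin r) ℝ × (Fin r → ℝ) =>
        z.2 ⬝ᵥ z.1 *ᵥ z.2 := by fun_prop
      refine hc.continuousAt.eventually_const_lt ?_
      have hx0 : x ≠ 0 := fun h => by simp [h] at hx
      have := Matrix.PosDef.dotProduct_mulVec_pos (Matrix.PosDef.one (n := Fin r) (R := ℝ)) hx0
      simpa using this)
  filter_upwards [h] with A hA hH
  refine Matrix.PosDef.of_dotProduct_mulVec_pos hH fun x hx => ?_
  have hn : 0 < ‖x‖ := norm_pos_iff.2 hx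
  have h1 := hA (‖x‖⁻¹ • x) (by simp [norm_smul, hn.ne'])
  rw [mulVec_smul, smul_dotProduct, dotProduct_smul, smul_smul, smul_eq_mul] at h1
  exact pos_of_mul_pos_right h1 (by positivity)

/-- An orthogonal representation of the non-edges inside `S` whose edge constraints are independent
yields an open set of data with a positive semidefinite stress. -/
theorem hasOpenStress_of_orthRep {n k r m : ℕ} {G : SimpleGraph (Fin n)} (S : Finset (Fin n))
    (hS : k + r ≤ S.card) (N₀ : Matrix (Fin n) (Fin r) ℝ) (hN₀ : ∀ i ∉ S, N₀ i = 0)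
    (hne : ∃ i, N₀ i ≠ 0) (a b : Fin m → Fin n)
    (hcov : ∀ i ∈ S, ∀ j ∈ S, i ≠ j → ¬ G.Adj i j →
      ∃ q, (i = a q ∧ j = b q) ∨ (i = b q ∧ j = a q))
    (horth : ∀ q, N₀ (a q) ⬝ᵥ N₀ (b q) = 0) (B : Fin m → Matrix (Fin r) (Fin r) ℝ)
    (hB : ∀ q, (B q)ᵀ = B q)
    (hdual : ∀ q l, N₀ (a q) ⬝ᵥ B l *ᵥ N₀ (b q) = (1 : Matrix (Fin m) (Fin m) ℝ) q l) :
    HasOpenStress G k := by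
  refine hasOpenStress_of_eventually S hS N₀ hN₀ ?_
  let M : Matrix (Fin n) (Fin r) ℝ → Matrix (Fin m) (Fin m) ℝ := fun N q l =>
    N (a q) ⬝ᵥ B l *ᵥ N (b q)
  let g : Matrix (Fin n) (Fin r) ℝ → Fin m → ℝ := fun N q => N (a q) ⬝ᵥ N (b q)
  have hMc : Continuous M := by
    refine continuous_pi fun q => continuous_pi fun l => ?_
    simp only [M, dotProduct, mulVec]
    fun_prop
  have hgc : Continuous g := by
    refine continuous_pi fun q => ?_
    simp only [g, dotProduct]
    fun_prop
  have hM₀ : M N₀ = 1 := by ext q l; exact hdual q l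
  have hg₀ : g N₀ = 0 := funext horth
  let c : Matrix (Fin n) (Fin r) ℝ → Fin m → ℝ := fun N =>
    -((M N).det⁻¹ • ((M N).adjugate *ᵥ g N))
  have hc₀ : c N₀ = 0 := by simp [c, hg₀]
  have hcc : ContinuousAt c N₀ := by
    refine (Filter.Tendsto.smul ?_ ?_).neg
    · exact hMc.matrix_det.continuousAt.inv₀ (by simp [hM₀])
    · exact (hMc.matrix_adjugate.matrix_mulVec hgc).continuousAt
  let A : Matrix (Fin n) (Fin r) ℝ → Matrix (Fin r) (Fin r) ℝ := fun N => 1 + ∑ l, c N l • B l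
  have hAc : ContinuousAt A N₀ := by
    refine continuousAt_const.add (tendsto_finsetSum _ fun l _ => ?_)
    exact ((continuous_apply l).continuousAt.comp hcc).smul continuousAt_const
  have hA₀ : A N₀ = 1 := by simp [A, hc₀]
  have hA := hAc.tendsto
  rw [hA₀] at hA
  obtain ⟨i₁, hi₁⟩ := hne
  have hrow : ∀ᶠ N : Matrix (Fin n) (Fin r) ℝ in nhds N₀, N i₁ ≠ 0 :=
    (continuous_apply i₁).continuousAt.eventually_ne hi₁
  filter_upwards [hA.eventually (eventually_posDef_nhds_one r), hrow,
    hMc.matrix_det.continuousAt.eventually_ne (by simp [hM₀] : (M N₀).det ≠ 0)] with N hN hNi hd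
  have hT : (A N)ᵀ = A N := by
    simp [A, Matrix.transpose_sum, hB]
  have hpos := hN hT
  refine ⟨A N, hpos.posSemidef, ⟨i₁, (hpos.dotProduct_mulVec_pos hNi).ne'⟩, ?_⟩
  have hq : ∀ q, N (a q) ⬝ᵥ A N *ᵥ N (b q) = 0 := by
    intro q
    have h1 : (M N *ᵥ c N) q = - g N q := by
      simp only [c]
      rw [mulVec_neg, mulVec_smul, mulVec_mulVec, Matrix.mul_adjugate, smul_mulVec, one_mulVec,
        smul_smul, inv_mul_cancel₀ hd, one_smul, Pi.neg_apply]
    have h2 : N (a q) ⬝ᵥ A N *ᵥ N (b q) = g N q + (M N *ᵥ c N) q := by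
      simp only [A, add_mulVec, one_mulVec, dotProduct_add, g]
      congr 1
      rw [sum_mulVec, dotProduct_sum]
      exact Finset.sum_congr rfl fun l _ => by
        rw [smul_mulVec, dotProduct_smul, smul_eq_mul, mul_comm]
    rw [h2, h1, add_neg_cancel]
  intro i hi j hj hij hG
  obtain ⟨q, ⟨rfl, rfl⟩ | ⟨rfl, rfl⟩⟩ := hcov i hi j hj hij hG
  · exact hq q
  · rw [dotProduct_mulVec, ← mulVec_transpose, hT, dotProduct_comm]
    exact hq q

theorem isIndepGraph_of_le {n k : ℕ} (G : SimpleGraph (Fin n)) (hk : n ≤ k + 1) :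
    IsIndepGraph k G :=
  isIndepGraph_of_gale (r := 0) (by omega) (fun _ => 0) (by simp) Fin.elim0 (fun b => b.elim0)
    fun _ _ _ a => a.elim0

theorem isIndepGraph_of_nonedge {n k : ℕ} {G : SimpleGraph (Fin n)} (hk : n ≤ k + 2)
    {a b : Fin n} (hab : Gᶜ.Adj a b) : IsIndepGraph k G := by
  have hne := hab.ne
  refine isIndepGraph_of_gale (r := 1) (by omega) (Pi.single a 1 - Pi.single b 1) ?_
    (fun _ => a) ?_ ?_
  · simp [Finset.sum_sub_distrib]
  · intro c; ext c'; fin_cases c; fin_cases c'; simp [hne]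
  · intro K hK hrep _ _
    have h1 := hrep a b
    rw [hK.2 a b hne ((G.compl_adj a b).1 hab).2] at h1
    simp [hne, hne.symm] at h1
    exact h1

theorem isIndepGraph_of_gale_two {n k : ℕ} {G : SimpleGraph (Fin n)} (hk : n ≤ k + 3)
    (N : Fin n → Fin 2 → ℝ) (hsum : ∑ i, N i = 0) (x y : Fin n) (hx : N x = ![1, 0])
    (hy : N y = ![0, 1])
    (hA : ∀ α β γ : ℝ, (∀ i j, Gᶜ.Adj i j →
      N i 0 * N j 0 * α + (N i 0 * N j 1 + N i 1 * N j 0) * β + N i 1 * N j 1 * γ = 0) →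
      α = 0 ∧ β = 0 ∧ γ = 0) : IsIndepGraph k G := by
  refine isIndepGraph_of_gale (r := 2) (by omega) N hsum ![x, y] ?_ ?_
  · intro b
    ext c
    fin_cases b <;> fin_cases c <;> simp [hx, hy]
  · intro K hK hrep
    obtain ⟨h1, h2, h3⟩ := hA (K x x) (K x y) (K y y) (by
      intro i j hij
      have h := hrep i j
      rw [hK.2 i j hij.ne ((G.compl_adj i j).1 hij).2] at h
      simp [Fin.sum_univ_two, hK.1 y x] at h
      linarith)
    intro a b
    have h4 := (hK.1 y x).trans h2
    fin_cases a <;> fin_cases b <;> simp [h1, h2, h3, h4]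

theorem isIndepGraph_of_triangle {n k : ℕ} {G : SimpleGraph (Fin n)} (hk : n ≤ k + 3)
    {a b c : Fin n} (hab : Gᶜ.Adj a b) (hbc : Gᶜ.Adj b c) (hac : Gᶜ.Adj a c) :
    IsIndepGraph k G := by
  have h1 := hab.ne
  have h2 := hbc.ne
  have h3 := hac.ne
  refine isIndepGraph_of_gale_two hk
    (Pi.single a ![1, 0] + Pi.single b ![0, 1] + Pi.single c ![-1, -1]) ?_ a b ?_ ?_ ?_
  · simp [Finset.sum_add_distrib]
  · simp [h1, h3]
  · simp [h1.symm, h2]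
  · intro α β γ h
    have e1 := h a b hab
    have e2 := h b c hbc
    have e3 := h a c hac
    simp [h1, h2, h3, h1.symm, h2.symm, h3.symm] at e1 e2 e3
    refine ⟨?_, ?_, ?_⟩ <;> linarith

theorem isIndepGraph_of_path_four {n k : ℕ} {G : SimpleGraph (Fin n)} (hk : n ≤ k + 3)
    {a b c d : Fin n} (hba : Gᶜ.Adj b a) (hac : Gᶜ.Adj a c) (hcd : Gᶜ.Adj c d)
    (hbc : b ≠ c) (had : a ≠ d) (hbd : b ≠ d) :
    IsIndepGraph k G := by
  have h1 := hba.ne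
  have h2 := hac.ne
  have h3 := hcd.ne
  refine isIndepGraph_of_gale_two hk
    (Pi.single a ![0, 1] + Pi.single b ![0, -1] + Pi.single c ![1, 0] + Pi.single d ![-1, 0])
    ?_ c a ?_ ?_ ?_
  · simp [Finset.sum_add_distrib]
  · simp [h2.symm, h3, hbc.symm]
  · simp [h1.symm, h2, had]
  · intro α β γ h
    have e1 := h b a hba
    have e2 := h a c hac
    have e3 := h c d hcd
    simp [h1, h2, h3, h1.symm, h2.symm, h3.symm, hbc, had, hbd, hbc.symm, had.symm, hbd.symm]
      at e1 e2 e3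
    exact ⟨e3, e2, e1⟩

theorem isIndepGraph_of_path_edge {n k : ℕ} {G : SimpleGraph (Fin n)} (hk : n ≤ k + 3)
    {a b c d f : Fin n} (hab : Gᶜ.Adj a b) (haf : Gᶜ.Adj a f) (hcd : Gᶜ.Adj c d)
    (hbf : b ≠ f) (hac : a ≠ c) (had : a ≠ d) (hbc : b ≠ c) (hbd : b ≠ d) (hfc : f ≠ c)
    (hfd : f ≠ d) : IsIndepGraph k G := by
  have h1 := hab.ne
  have h2 := haf.ne
  have h3 := hcd.ne
  refine isIndepGraph_of_gale_two hk
    (Pi.single a ![1, 0] + Pi.single b ![1, 0] + Pi.single f ![0, 1] + Pi.single c ![0, 1]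
      + Pi.single d ![-2, -2]) ?_ a f ?_ ?_ ?_
  · simp [Finset.sum_add_distrib]; norm_num
  · simp [h1, h2, hac, had]
  · simp [h2.symm, hbf.symm, hfc, hfd]
  · intro α β γ h
    have e1 := h a b hab
    have e2 := h a f haf
    have e3 := h c d hcd
    simp [h1, h2, h3, h1.symm, h2.symm, h3.symm, hbf, hac, had, hbc, hbd, hfc, hfd, hbf.symm,
      hac.symm, had.symm, hbc.symm, hbd.symm, hfc.symm, hfd.symm] at e1 e2 e3
    refine ⟨?_, ?_, ?_⟩ <;> linarith

theorem isIndepGraph_of_three_edges {n k : ℕ} {G : SimpleGraph (Fin n)} (hk : n ≤ k + 3)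
    {a b c d e f : Fin n} (hab : Gᶜ.Adj a b) (hcd : Gᶜ.Adj c d) (hef : Gᶜ.Adj e f)
    (hac : a ≠ c) (had : a ≠ d) (hbc : b ≠ c) (hbd : b ≠ d) (hea : e ≠ a) (heb : e ≠ b)
    (hec : e ≠ c) (hed : e ≠ d) (hfa : f ≠ a) (hfb : f ≠ b) (hfc : f ≠ c) (hfd : f ≠ d) :
    IsIndepGraph k G := by
  have h1 := hab.ne
  have h2 := hcd.ne
  have h3 := hef.ne
  refine isIndepGraph_of_gale_two hk
    (Pi.single a ![1, 0] + Pi.single b ![-1, 0] + Pi.single c ![0, 1] + Pi.single d ![0, -1]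
      + Pi.single e ![1, 1] + Pi.single f ![-1, -1]) ?_ a c ?_ ?_ ?_
  · simp [Finset.sum_add_distrib]
  · simp [h1, hac, had, hea.symm, hfa.symm]
  · simp [hac.symm, hbc.symm, h2, hec.symm, hfc.symm]
  · intro α β γ h
    have e1 := h a b hab
    have e2 := h c d hcd
    have e3 := h e f hef
    simp [h1, h2, h3, h1.symm, h2.symm, h3.symm, hac, had, hbc, hbd, hac.symm, had.symm, hbc.symm,
      hbd.symm, hea, heb, hec, hed, hfa, hfb, hfc, hfd, hea.symm, heb.symm, hec.symm, hed.symm,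
      hfa.symm, hfb.symm, hfc.symm, hfd.symm] at e1 e2 e3
    refine ⟨?_, ?_, ?_⟩ <;> linarith

/-- If `G` on at most `k + 3` vertices is not `k`-independent, then its complement is a star or
is contained in a pair of disjoint edges. -/
theorem exists_cover_of_not_isIndepGraph {n k : ℕ} {G : SimpleGraph (Fin n)} (hn : 0 < n)
    (hk : n ≤ k + 3) (h : ¬ IsIndepGraph k G) :
    (∃ v, ∀ i j, Gᶜ.Adj i j → i = v ∨ j = v) ∨
    ∃ a b c d, a ≠ b ∧ c ≠ d ∧ a ≠ c ∧ a ≠ d ∧ b ≠ c ∧ b ≠ d ∧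
      ∀ i j, Gᶜ.Adj i j → s(i, j) = s(a, b) ∨ s(i, j) = s(c, d) := by
  by_cases hd : ∃ a b c d, Gᶜ.Adj a b ∧ Gᶜ.Adj c d ∧ a ≠ c ∧ a ≠ d ∧ b ≠ c ∧ b ≠ d
  · right
    obtain ⟨a, b, c, d, hab, hcd, hac, had, hbc, hbd⟩ := hd
    refine ⟨a, b, c, d, hab.ne, hcd.ne, hac, had, hbc, hbd, fun e f hef => ?_⟩
    by_contra hcon
    refine h ?_
    have hlink : ∀ a b c d e f : Fin n, Gᶜ.Adj a b → Gᶜ.Adj c d → Gᶜ.Adj e f → a ≠ c → a ≠ d →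
        b ≠ c → b ≠ d → e = a → ¬ (s(e, f) = s(a, b) ∨ s(e, f) = s(c, d)) → IsIndepGraph k G := by
      intro a b c d e f hab hcd hef hac had hbc hbd hea hcon
      subst hea
      have hfb : b ≠ f := by rintro rfl; simp at hcon
      by_cases hfc : f = c
      · subst hfc
        exact isIndepGraph_of_path_four hk hab.symm hef hcd hbc had hbd
      by_cases hfd : f = d
      · subst hfd
        exact isIndepGraph_of_path_four hk hab.symm hef hcd.symm hbd hac hbc
      exact isIndepGraph_of_path_edge hk hab hef hcd hfb hac had hbc hbd hfc hfd
    have hlink2 : ∀ e f : Fin n, Gᶜ.Adj e f →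
        ¬ (s(e, f) = s(a, b) ∨ s(e, f) = s(c, d)) → (e = a ∨ e = b ∨ e = c ∨ e = d) →
        IsIndepGraph k G := by
      rintro e f hef hcon (he | he | he | he)
      · exact hlink a b c d e f hab hcd hef hac had hbc hbd he hcon
      · exact hlink b a c d e f hab.symm hcd hef hbc hbd hac had he
          (by rwa [Sym2.eq_swap (a := b) (b := a)])
      · exact hlink c d a b e f hcd hab hef hac.symm hbc.symm had.symm hbd.symm he
          (by rwa [or_comm])
      · exact hlink d c a b e f hcd.symm hab hef had.symm hbd.symm hac.symm hbc.symm he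
          (by rwa [or_comm, Sym2.eq_swap (a := d) (b := c)])
    by_cases he : e = a ∨ e = b ∨ e = c ∨ e = d
    · exact hlink2 e f hef hcon he
    by_cases hf : f = a ∨ f = b ∨ f = c ∨ f = d
    · exact hlink2 f e hef.symm (by rwa [Sym2.eq_swap]) hf
    push Not at he hf
    exact isIndepGraph_of_three_edges hk hab hcd hef hac had hbc hbd he.1 he.2.1 he.2.2.1 he.2.2.2
      hf.1 hf.2.1 hf.2.2.1 hf.2.2.2
  · left
    by_contra hstar
    push Not at hd hstar
    obtain ⟨a, b, hab, -, -⟩ := hstar ⟨0, hn⟩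
    obtain ⟨i, j, hij, hia, hja⟩ := hstar a
    obtain ⟨i', j', hij', hib, hjb⟩ := hstar b
    have hb : ∃ c, Gᶜ.Adj b c ∧ c ≠ a := by
      by_cases hbi : b = i
      · subst hbi; exact ⟨j, hij, hja⟩
      by_cases hbj : b = j
      · subst hbj; exact ⟨i, hij.symm, hia⟩
      exact absurd (hd a b i j hab hij (Ne.symm hia) (Ne.symm hja) hbi) hbj
    have ha : ∃ c, Gᶜ.Adj a c ∧ c ≠ b := by
      by_cases hai : a = i'
      · subst hai; exact ⟨j', hij', hjb⟩
      by_cases haj : a = j'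
      · subst haj; exact ⟨i', hij'.symm, hib⟩
      exact absurd (hd b a i' j' hab.symm hij' (Ne.symm hib) (Ne.symm hjb) hai) haj
    obtain ⟨c, hbc, hca⟩ := hb
    obtain ⟨c', hac', hcb⟩ := ha
    by_cases hcc : c = c'
    · subst hcc
      exact h (isIndepGraph_of_triangle hk hab hbc hac')
    · exact hcc ((hd b c a c' hbc hac' hab.ne.symm (Ne.symm hcb) hca))

theorem hasOpenStress_of_clique {n k : ℕ} {G : SimpleGraph (Fin n)} (S : Finset (Fin n))
    (hS : k + 1 ≤ S.card) (h : ∀ i ∈ S, ∀ j ∈ S, ¬ Gᶜ.Adj i j) : HasOpenStress G k := by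
  obtain ⟨i, hi⟩ := Finset.card_pos.1 (by omega : 0 < S.card)
  refine hasOpenStress_of_orthRep (r := 1) (m := 0) S hS (fun i _ => if i ∈ S then 1 else 0) ?_
    ⟨i, ?_⟩ Fin.elim0 Fin.elim0 ?_ (fun q => q.elim0) (fun q => q.elim0) (fun q => q.elim0)
    fun q => q.elim0
  · intro j hj; ext; simp [hj]
  · intro h0; simpa [hi] using congrFun h0 0
  · intro a ha b hb hab hG
    exact absurd ((G.compl_adj a b).2 ⟨hab, hG⟩) (h a ha b hb)

theorem hasOpenStress_of_two_edges {n k : ℕ} {G : SimpleGraph (Fin n)} (S : Finset (Fin n))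
    (hS : k + 2 ≤ S.card) {a b c d : Fin n} (ha : a ∈ S) (hb : b ∈ S) (hc : c ∈ S) (hd : d ∈ S)
    (hab : a ≠ b) (hcd : c ≠ d) (hac : a ≠ c) (had : a ≠ d) (hbc : b ≠ c) (hbd : b ≠ d)
    (h : ∀ i ∈ S, ∀ j ∈ S, Gᶜ.Adj i j → s(i, j) = s(a, b) ∨ s(i, j) = s(c, d)) :
    HasOpenStress G k := by
  let N : Matrix (Fin n) (Fin 2) ℝ := fun i =>
    if i = a then ![1, 0] else if i = b then ![0, 1] else if i = c then ![1, 1] else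
      if i = d then ![1, -1] else 0
  have Na : N a = ![1, 0] := by simp [N]
  have Nb : N b = ![0, 1] := by simp [N, hab.symm]
  have Nc : N c = ![1, 1] := by simp [N, hac.symm, hbc.symm]
  have Nd : N d = ![1, -1] := by simp [N, had.symm, hbd.symm, hcd.symm]
  refine hasOpenStress_of_orthRep S hS N ?_ ⟨a, ?_⟩ ![a, c] ![b, d] ?_ ?_
    ![!![0, 1; 1, 0], !![1, 0; 0, 0]] ?_ ?_
  · intro i hi
    have : ∀ x ∈ S, i ≠ x := fun x hx h => hi (h ▸ hx)
    simp [N, this a ha, this b hb, this c hc, this d hd]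
  · rw [Na]; intro h0; simpa using congrFun h0 0
  · intro i hi j hj hij hG
    rcases h i hi j hj ((G.compl_adj i j).2 ⟨hij, hG⟩) with h' | h'
    · exact ⟨0, by simpa using h'⟩
    · exact ⟨1, by simpa using h'⟩
  · intro q; fin_cases q <;> simp [Na, Nb, Nc, Nd]
  · intro q; fin_cases q <;> ext i j <;> fin_cases i <;> fin_cases j <;> rfl
  · intro q l
    fin_cases q <;> fin_cases l <;> simp [Na, Nb, Nc, Nd, vecHead, vecTail]

/-- Five non-edges that map to the edges of a pentagon. -/
theorem hasOpenStress_of_pentagon {n k : ℕ} {G : SimpleGraph (Fin n)} (S : Finset (Fin n))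
    (hS : k + 3 ≤ S.card) (a b : Fin 5 → Fin n) (ha : ∀ q, a q ∈ S) (hb : ∀ q, b q ∈ S)
    (hainj : Function.Injective a) (hbinj : Function.Injective b)
    (hab : ∀ i j, a i = b j → i = j + 1)
    (h : ∀ i ∈ S, ∀ j ∈ S, Gᶜ.Adj i j → ∃ q, s(i, j) = s(a q, b q)) :
    HasOpenStress G k := by
  classical
  let v : Fin 5 → Fin 3 → ℝ := ![![1, 0, 0], ![0, 1, 0], ![1, 0, 1], ![1, 1, -1], ![0, 1, 1]]
  let N : Matrix (Fin n) (Fin 3) ℝ := fun x =>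
    if h : ∃ q, a q = x then v h.choose else if h : ∃ q, b q = x then v (h.choose + 1) else 0
  have Na : ∀ q, N (a q) = v q := by
    intro q
    have hq : ∃ q', a q' = a q := ⟨q, rfl⟩
    simp only [N, hq, dif_pos]
    rw [hainj hq.choose_spec]
  have Nb : ∀ q, N (b q) = v (q + 1) := by
    intro q
    by_cases hq : ∃ q', a q' = b q
    · simp only [N, hq, dif_pos]
      rw [hab _ _ hq.choose_spec]
    · have hq' : ∃ q', b q' = b q := ⟨q, rfl⟩
      simp only [N, hq, hq', dif_pos]
      rw [dif_neg not_false, hbinj hq'.choose_spec]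
  refine hasOpenStress_of_orthRep S hS N ?_ ⟨a 0, ?_⟩ a b ?_ ?_
    ![!![0, 1, -1; 1, 0, -1; -1, -1, 0], !![-1, 0, 0; 0, 0, 1; 0, 1, 0],
      !![1, 0, 0; 0, 0, 0; 0, 0, 0], !![0, 0, 0; 0, 1, 0; 0, 0, 0],
      !![0, 0, 1; 0, -1, 0; 1, 0, 0]] ?_ ?_
  · intro i hi
    have h1 : ¬ ∃ q, a q = i := fun ⟨q, hq⟩ => hi (hq ▸ ha q)
    have h2 : ¬ ∃ q, b q = i := fun ⟨q, hq⟩ => hi (hq ▸ hb q)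
    simp only [N, h1, h2]
    simp
  · rw [Na]; intro h0; simpa [v] using congrFun h0 0
  · intro i hi j hj hij hG
    obtain ⟨q, hq⟩ := h i hi j hj ((G.compl_adj i j).2 ⟨hij, hG⟩)
    exact ⟨q, by simpa using hq⟩
  · intro q; rw [Na, Nb]; fin_cases q <;> simp [v]
  · intro q; fin_cases q <;> ext i j <;> fin_cases i <;> fin_cases j <;> rfl
  · intro q l
    rw [Na, Nb]
    fin_cases q <;> fin_cases l <;> simp [v, vecHead, vecTail]

/-- A triangle and two further non-edges disjoint from it. -/
theorem hasOpenStress_of_triangle {n k : ℕ} {G : SimpleGraph (Fin n)} (S : Finset (Fin n))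
    (hS : k + 3 ≤ S.card) {x y z s t s' t' : Fin n} (hx : x ∈ S) (hy : y ∈ S) (hz : z ∈ S)
    (hs : s ∈ S) (ht : t ∈ S) (hs' : s' ∈ S) (ht' : t' ∈ S)
    (hxy : x ≠ y) (hyz : y ≠ z) (hxz : x ≠ z)
    (hd : ∀ w ∈ ({s, t, s', t'} : Set (Fin n)), w ≠ x ∧ w ≠ y ∧ w ≠ z)
    (hst : s ≠ t) (hss' : s ≠ s') (hst' : s ≠ t') (hs't : s' ≠ t) (hs't' : s' ≠ t')
    (h : ∀ i ∈ S, ∀ j ∈ S, Gᶜ.Adj i j → s(i, j) = s(x, y) ∨ s(i, j) = s(y, z) ∨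
      s(i, j) = s(x, z) ∨ s(i, j) = s(s, t) ∨ s(i, j) = s(s', t')) :
    HasOpenStress G k := by
  have ds := hd s (by simp)
  have dt := hd t (by simp)
  have ds' := hd s' (by simp)
  have dt' := hd t' (by simp)
  let N : Matrix (Fin n) (Fin 3) ℝ := fun i =>
    if i = x then ![1, 0, 0] else if i = y then ![0, 1, 0] else if i = z then ![0, 0, 1] else
      if i = s then ![1, -1, 0] else if i = s' then ![1, 0, -1] else
      if i = t ∨ i = t' then ![1, 1, 1] else 0
  have Nx : N x = ![1, 0, 0] := by simp [N]
  have Ny : N y = ![0, 1, 0] := by simp [N, hxy.symm]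
  have Nz : N z = ![0, 0, 1] := by simp [N, hxz.symm, hyz.symm]
  have Ns : N s = ![1, -1, 0] := by simp [N, ds]
  have Ns' : N s' = ![1, 0, -1] := by simp [N, ds', hss'.symm]
  have Nt : N t = ![1, 1, 1] := by simp [N, dt, hst.symm, hs't.symm]
  have Nt' : N t' = ![1, 1, 1] := by simp [N, dt', hst'.symm, hs't'.symm]
  refine hasOpenStress_of_orthRep S hS N ?_ ⟨x, ?_⟩ ![x, y, x, s, s'] ![y, z, z, t, t'] ?_ ?_
    ![!![0, 1, 0; 1, 0, 0; 0, 0, 1], !![0, 0, 0; 0, -1, 1; 0, 1, -1],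
      !![0, 0, 1; 0, 1, 0; 1, 0, 0], !![0, 0, 0; 0, -1, 0; 0, 0, 0],
      !![0, 0, 0; 0, 0, 0; 0, 0, -1]] ?_ ?_
  · intro i hi
    have : ∀ x ∈ S, i ≠ x := fun x hx h => hi (h ▸ hx)
    simp [N, this x hx, this y hy, this z hz, this s hs, this t ht, this s' hs', this t' ht']
  · rw [Nx]; intro h0; simpa using congrFun h0 0
  · intro i hi j hj hij hG
    rcases h i hi j hj ((G.compl_adj i j).2 ⟨hij, hG⟩) with h' | h' | h' | h' | h'
    · exact ⟨0, by simpa using h'⟩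
    · exact ⟨1, by simpa using h'⟩
    · exact ⟨2, by simpa using h'⟩
    · exact ⟨3, by simpa using h'⟩
    · exact ⟨4, by simpa using h'⟩
  · intro q; fin_cases q <;> simp [Nx, Ny, Nz, Ns, Ns', Nt, Nt']
  · intro q; fin_cases q <;> ext i j <;> fin_cases i <;> fin_cases j <;> rfl
  · intro q l
    fin_cases q <;> fin_cases l <;>
      simp [Nx, Ny, Nz, Ns, Ns', Nt, Nt', vecHead, vecTail]

/-- A four-cycle and a non-edge disjoint from it. -/
theorem hasOpenStress_of_fourCycle {n k : ℕ} {G : SimpleGraph (Fin n)} (S : Finset (Fin n))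
    (hS : k + 3 ≤ S.card) {x y z w s t : Fin n} (hx : x ∈ S) (hy : y ∈ S) (hz : z ∈ S)
    (hw : w ∈ S) (hs : s ∈ S) (ht : t ∈ S) (hxy : x ≠ y) (hxz : x ≠ z) (hxw : x ≠ w)
    (hyz : y ≠ z) (hyw : y ≠ w) (hzw : z ≠ w) (hst : s ≠ t)
    (ds : s ≠ x ∧ s ≠ y ∧ s ≠ z ∧ s ≠ w) (dt : t ≠ x ∧ t ≠ y ∧ t ≠ z ∧ t ≠ w)
    (h : ∀ i ∈ S, ∀ j ∈ S, Gᶜ.Adj i j → s(i, j) = s(x, y) ∨ s(i, j) = s(y, z) ∨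
      s(i, j) = s(z, w) ∨ s(i, j) = s(w, x) ∨ s(i, j) = s(s, t)) :
    HasOpenStress G k := by
  let N₀ : Matrix (Fin n) (Fin 3) ℝ := fun i =>
    if i = x then ![0, 1, 0] else if i = y then ![1, 0, 0] else if i = z then ![0, 0, 1] else
      if i = w then ![0, 0, 1] else if i = s then ![1, 1, 0] else
      if i = t then ![1, -1, 0] else 0
  have Nx : N₀ x = ![0, 1, 0] := by simp [N₀]
  have Ny : N₀ y = ![1, 0, 0] := by simp [N₀, hxy.symm]
  have Nz : N₀ z = ![0, 0, 1] := by simp [N₀, hxz.symm, hyz.symm]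
  have Nw : N₀ w = ![0, 0, 1] := by simp [N₀, hxw.symm, hyw.symm, hzw.symm]
  have Ns : N₀ s = ![1, 1, 0] := by simp [N₀, ds]
  have Nt : N₀ t = ![1, -1, 0] := by simp [N₀, dt, hst.symm]
  refine hasOpenStress_of_eventually S hS N₀ ?_ ?_
  · intro i hi
    have : ∀ x ∈ S, i ≠ x := fun x hx h => hi (h ▸ hx)
    simp [N₀, this x hx, this y hy, this z hz, this s hs, this t ht, this w hw]
  let α : Matrix (Fin n) (Fin 3) ℝ → ℝ := fun N =>
    (N y ⨯₃ N w) ⬝ᵥ N s * (N y ⨯₃ N w) ⬝ᵥ N t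
  let β : Matrix (Fin n) (Fin 3) ℝ → ℝ := fun N =>
    (N x ⨯₃ N z) ⬝ᵥ N s * (N x ⨯₃ N z) ⬝ᵥ N t
  have hα : Continuous α := by
    simp only [α, cross_apply, Matrix.vec3_dotProduct]
    simp
    fun_prop
  have hβ : Continuous β := by
    simp only [β, cross_apply, Matrix.vec3_dotProduct]
    simp
    fun_prop
  have hα₀ : α N₀ < 0 := by
    simp [α, Ny, Nw, Ns, Nt, cross_apply]
  have hβ₀ : 0 < β N₀ := by
    simp [β, Nx, Nz, Ns, Nt, cross_apply]
  filter_upwards [hα.continuousAt.eventually_lt_const hα₀,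
    hβ.continuousAt.eventually_const_lt hβ₀] with N hαN hβN
  set u := N x ⨯₃ N z with hu
  set v := N y ⨯₃ N w with hv
  have hA : ∀ i j, N i ⬝ᵥ ((-α N) • vecMulVec u (star u) + β N • vecMulVec v (star v)) *ᵥ N j
      = -α N * (u ⬝ᵥ N i * u ⬝ᵥ N j) + β N * (v ⬝ᵥ N i * v ⬝ᵥ N j) := by
    intro i j
    simp [add_mulVec, neg_mulVec, smul_mulVec, vecMulVec_mulVec, dotProduct_add, dotProduct_smul]
    rw [dotProduct_comm (N i) u, dotProduct_comm (N i) v]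
    ring
  have hux : u ⬝ᵥ N x = 0 := by rw [dotProduct_comm]; exact dot_self_cross _ _
  have huz : u ⬝ᵥ N z = 0 := by rw [dotProduct_comm]; exact dot_cross_self _ _
  have hvy : v ⬝ᵥ N y = 0 := by rw [dotProduct_comm]; exact dot_self_cross _ _
  have hvw : v ⬝ᵥ N w = 0 := by rw [dotProduct_comm]; exact dot_cross_self _ _
  have hst0 : -α N * (u ⬝ᵥ N s * u ⬝ᵥ N t) + β N * (v ⬝ᵥ N s * v ⬝ᵥ N t) = 0 := by
    simp only [α, β, ← hu, ← hv]
    ring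
  have hts0 : -α N * (u ⬝ᵥ N t * u ⬝ᵥ N s) + β N * (v ⬝ᵥ N t * v ⬝ᵥ N s) = 0 := by
    rw [← hst0]; ring
  refine ⟨(-α N) • vecMulVec u (star u) + β N • vecMulVec v (star v),
    ((posSemidef_vecMulVec_self_star u).smul (by linarith)).add
      ((posSemidef_vecMulVec_self_star v).smul hβN.le), ⟨s, ?_⟩, ?_⟩
  · rw [hA]
    have h1 : v ⬝ᵥ N s ≠ 0 := fun h0 => by
      simp only [α, ← hv, h0, zero_mul] at hαN
      exact lt_irrefl _ hαN
    have h2 : 0 < v ⬝ᵥ N s * v ⬝ᵥ N s := mul_self_pos.2 h1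
    have h3 := mul_self_nonneg (u ⬝ᵥ N s)
    nlinarith [mul_pos hβN h2, mul_nonneg (neg_pos.2 hαN).le h3]
  · intro i hi j hj hij hG
    rw [hA]
    rcases h i hi j hj ((G.compl_adj i j).2 ⟨hij, hG⟩) with h' | h' | h' | h' | h' <;>
      rw [Sym2.eq_iff] at h' <;> rcases h' with ⟨rfl, rfl⟩ | ⟨rfl, rfl⟩ <;>
      first
        | exact hst0
        | exact hts0
        | simp [hux, huz, hvy, hvw]

theorem hasOpenStress_of_star {n k : ℕ} {G : SimpleGraph (Fin n)} (S : Finset (Fin n))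
    (hS : k + 2 ≤ S.card) (v : Fin n)
    (h : ∀ i ∈ S, ∀ j ∈ S, Gᶜ.Adj i j → i = v ∨ j = v) : HasOpenStress G k := by
  refine hasOpenStress_of_clique (S.erase v) ?_ fun i hi j hj hij => ?_
  · have := Finset.pred_card_le_card_erase (s := S) (a := v)
    omega
  · rw [Finset.mem_erase] at hi hj
    exact (h i hi.2 j hj.2 hij).elim hi.1 hj.1

theorem exists_mem_rest {V : Type*} [DecidableEq V] {F T : Finset (Sym2 V)} {m : ℕ}
    (hT : T ⊆ F) (h : F.card = T.card + (m + 1)) :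
    ∃ x y, s(x, y) ∈ F ∧ s(x, y) ∉ T ∧ (insert s(x, y) T).card = T.card + 1 ∧
      insert s(x, y) T ⊆ F := by
  obtain ⟨e, heF, heT⟩ := Finset.exists_mem_notMem_of_card_lt_card (by omega : T.card < F.card)
  induction e with
  | h x y => exact ⟨x, y, heF, heT, Finset.card_insert_of_notMem heT,
      Finset.insert_subset heF hT⟩

theorem hasOpenStress_of_card_le_two {n k : ℕ} {G : SimpleGraph (Fin n)} (S : Finset (Fin n))
    (hS : k + 2 ≤ S.card) (F : Finset (Sym2 (Fin n)))
    (hF : ∀ x y, s(x, y) ∈ F ↔ x ∈ S ∧ y ∈ S ∧ Gᶜ.Adj x y) (hc : F.card ≤ 2) :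
    HasOpenStress G k := by
  interval_cases hm : F.card
  · refine hasOpenStress_of_clique S (by omega) fun i hi j hj hij => ?_
    rw [Finset.card_eq_zero] at hm
    simpa [hm] using (hF i j).2 ⟨hi, hj, hij⟩
  · obtain ⟨e, he⟩ := Finset.card_eq_one.1 hm
    induction e with
    | h a b =>
      refine hasOpenStress_of_star S hS a fun i hi j hj hij => ?_
      have := (hF i j).2 ⟨hi, hj, hij⟩
      rw [he, Finset.mem_singleton, Sym2.eq_iff] at this
      tauto
  · obtain ⟨e, f, hef, he⟩ := Finset.card_eq_two.1 hm
    induction e with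
    | h a b =>
    induction f with
    | h c d =>
      have hF' : ∀ i ∈ S, ∀ j ∈ S, Gᶜ.Adj i j → s(i, j) = s(a, b) ∨ s(i, j) = s(c, d) := by
        intro i hi j hj hij
        have := (hF i j).2 ⟨hi, hj, hij⟩
        rwa [he, Finset.mem_insert, Finset.mem_singleton] at this
      by_cases hsh : ∃ v, (v = a ∨ v = b) ∧ (v = c ∨ v = d)
      · obtain ⟨v, h1, h2⟩ := hsh
        refine hasOpenStress_of_star S hS v fun i hi j hj hij => ?_
        have := hF' i hi j hj hij
        rw [Sym2.eq_iff, Sym2.eq_iff] at this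
        grind
      · push Not at hsh
        have h1 := (hF a b).1 (by simp [he])
        have h2 := (hF c d).1 (by simp [he])
        have ha := hsh a (Or.inl rfl)
        have hb := hsh b (Or.inr rfl)
        exact hasOpenStress_of_two_edges S hS h1.1 h1.2.1 h2.1 h2.2.1 h1.2.2.ne h2.2.2.ne ha.1 ha.2
          hb.1 hb.2 hF'

theorem hasOpenStress_of_chain {n k : ℕ} {G : SimpleGraph (Fin n)} (S : Finset (Fin n))
    (hS : k + 3 ≤ S.card) (F : Finset (Sym2 (Fin n)))
    (hF : ∀ x y, s(x, y) ∈ F ↔ x ∈ S ∧ y ∈ S ∧ Gᶜ.Adj x y) (a b : Fin 5 → Fin n)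
    (ha : ∀ q, a q ∈ S) (hb : ∀ q, b q ∈ S) (hcov : ∀ e ∈ F, ∃ q, e = s(a q, b q))
    (hne : ∀ i j, i ≠ j → a i ≠ a j ∧ b i ≠ b j) (hlink : ∀ i j, i ≠ j + 1 → a i ≠ b j) :
    HasOpenStress G k :=
  hasOpenStress_of_pentagon S hS a b ha hb (fun i j h => by_contra fun h' => (hne i j h').1 h)
    (fun i j h => by_contra fun h' => (hne i j h').2 h)
    (fun i j h => by_contra fun h' => hlink i j h' h)
    fun i hi j hj hij => hcov _ ((hF i j).2 ⟨hi, hj, hij⟩)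

theorem exists_orientation_pair {V : Type*} {p q p' q' : V}
    (h : s(p, q) ≠ s(p', q')) (hp : p ≠ q) (hp' : p' ≠ q') :
    ∃ s t s' t', s(s, t) = s(p, q) ∧ s(s', t') = s(p', q') ∧ s ≠ s' ∧ s ≠ t' ∧ s' ≠ t ∧
      s ≠ t ∧ s' ≠ t' := by
  rw [Ne, Sym2.eq_iff] at h
  by_cases h1 : p = p'
  · exact ⟨q, p, q', p', by grind⟩
  by_cases h2 : p = q'
  · exact ⟨q, p, p', q', by grind⟩
  by_cases h3 : q = p'
  · exact ⟨p, q, q', p', by grind⟩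
  by_cases h4 : q = q'
  · exact ⟨p, q, p', q', by grind⟩
  exact ⟨p, q, p', q', by grind⟩

theorem hasOpenStress_of_fourPath {n k : ℕ} {G : SimpleGraph (Fin n)} (S : Finset (Fin n))
    (hS : k + 3 ≤ S.card) (F : Finset (Sym2 (Fin n)))
    (hF : ∀ x y, s(x, y) ∈ F ↔ x ∈ S ∧ y ∈ S ∧ Gᶜ.Adj x y) (hc : F.card = 5)
    (hdeg : ∀ x y z w, s(x, y) ∈ F → s(x, z) ∈ F → s(x, w) ∈ F → y ≠ z → w = y ∨ w = z)
    {x y z w u : Fin n} (h1 : s(x, y) ∈ F) (h2 : s(y, z) ∈ F) (h3 : s(z, w) ∈ F)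
    (h4 : s(w, u) ∈ F) (hxz : x ≠ z) (hxw : x ≠ w) (hxu : x ≠ u) (hyw : y ≠ w) (hyu : y ≠ u)
    (hzu : z ≠ u) : HasOpenStress G k := by
  have hirr : ∀ x y, s(x, y) ∈ F → x ≠ y := fun x y h => ((hF x y).1 h).2.2.ne
  have hS' : ∀ x y, s(x, y) ∈ F → x ∈ S ∧ y ∈ S := fun x y h => ⟨((hF x y).1 h).1, ((hF x y).1 h).2.1⟩
  have hsymm : ∀ x y, s(x, y) ∈ F → s(y, x) ∈ F := fun x y h => by rwa [Sym2.eq_swap]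
  have e1 := hirr _ _ h1
  have e2 := hirr _ _ h2
  have e3 := hirr _ _ h3
  have e4 := hirr _ _ h4
  let T : Finset (Sym2 (Fin n)) := {s(x, y), s(y, z), s(z, w), s(w, u)}
  have hT : T.card = 4 := by
    simp only [T]
    rw [Finset.card_insert_of_notMem, Finset.card_insert_of_notMem, Finset.card_insert_of_notMem,
      Finset.card_singleton] <;> simp <;> grind
  have hTF : T ⊆ F := by
    intro e he
    simp only [T, Finset.mem_insert, Finset.mem_singleton] at he
    rcases he with rfl | rfl | rfl | rfl <;> assumption
  obtain ⟨s, t, hst, hnot, hcard, hsub⟩ := exists_mem_rest (m := 0) hTF (by omega)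
  have hall : insert s(s, t) T = F := Finset.eq_of_subset_of_card_le hsub (by omega)
  have est := hirr _ _ hst
  simp only [T, Finset.mem_insert, Finset.mem_singleton, not_or, Sym2.eq_iff] at hnot
  have hy := fun v => hdeg y x z v (hsymm _ _ h1) h2
  have hz := fun v => hdeg z y w v (hsymm _ _ h2) h3
  have hw := fun v => hdeg w z u v (hsymm _ _ h3) h4
  have hmid : ∀ s t, s(s, t) ∈ F →
      ¬ (s = x ∧ t = y ∨ s = y ∧ t = x) → ¬ (s = y ∧ t = z ∨ s = z ∧ t = y) →
      ¬ (s = z ∧ t = w ∨ s = w ∧ t = z) → ¬ (s = w ∧ t = u ∨ s = u ∧ t = w) →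
      s ≠ y ∧ s ≠ z ∧ s ≠ w := by
    intro s t hst n1 n2 n3 n4
    refine ⟨?_, ?_, ?_⟩ <;> rintro rfl <;> grind
  have m1 := hmid s t hst (by grind) (by grind) (by grind) (by grind)
  have m2 := hmid t s (hsymm _ _ hst) (by grind) (by grind) (by grind) (by grind)
  have key : ∀ s t : Fin n, s(s, t) ∈ F → insert s(s, t) T = F → s ≠ t → s ≠ y ∧ s ≠ z ∧ s ≠ w →
      t ≠ y ∧ t ≠ z ∧ t ≠ w → s ≠ x → t ≠ u → HasOpenStress G k := by
    intro s t hst hall est m1 m2 hsx htu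
    refine hasOpenStress_of_chain S hS F hF ![x, y, z, w, s] ![y, z, w, u, t] ?_ ?_ ?_ ?_ ?_
    · intro q; fin_cases q <;> simp <;> grind
    · intro q; fin_cases q <;> simp <;> grind
    · intro e he
      rw [← hall] at he
      simp only [T, Finset.mem_insert, Finset.mem_singleton] at he
      rcases he with he | he | he | he | he
      exacts [⟨4, he⟩, ⟨0, he⟩, ⟨1, he⟩, ⟨2, he⟩, ⟨3, he⟩]
    · intro i j; fin_cases i <;> fin_cases j <;> simp <;> grind
    · intro i j; fin_cases i <;> fin_cases j <;> simp <;> grind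
  by_cases hor : s = x ∨ t = u
  · refine key t s (hsymm _ _ hst) (by rwa [Sym2.eq_swap]) est.symm m2 m1 ?_ ?_ <;> grind
  · push Not at hor
    exact key s t hst hall est m1 m2 hor.1 hor.2

theorem hasOpenStress_of_containsTriangle {n k : ℕ} {G : SimpleGraph (Fin n)}
    (S : Finset (Fin n)) (hS : k + 3 ≤ S.card) (F : Finset (Sym2 (Fin n)))
    (hF : ∀ x y, s(x, y) ∈ F ↔ x ∈ S ∧ y ∈ S ∧ Gᶜ.Adj x y) (hc : F.card = 5)
    (hdeg : ∀ x y z w, s(x, y) ∈ F → s(x, z) ∈ F → s(x, w) ∈ F → y ≠ z → w = y ∨ w = z)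
    {x y z : Fin n} (h1 : s(x, y) ∈ F) (h2 : s(y, z) ∈ F) (h3 : s(x, z) ∈ F) :
    HasOpenStress G k := by
  have hirr : ∀ x y, s(x, y) ∈ F → x ≠ y := fun x y h => ((hF x y).1 h).2.2.ne
  have hS' : ∀ x y, s(x, y) ∈ F → x ∈ S ∧ y ∈ S := fun x y h =>
    ⟨((hF x y).1 h).1, ((hF x y).1 h).2.1⟩
  have hsymm : ∀ x y, s(x, y) ∈ F → s(y, x) ∈ F := fun x y h => by rwa [Sym2.eq_swap]
  have e1 := hirr _ _ h1
  have e2 := hirr _ _ h2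
  have e3 := hirr _ _ h3
  let T : Finset (Sym2 (Fin n)) := {s(x, y), s(y, z), s(x, z)}
  have hT : T.card = 3 := by
    simp only [T]
    rw [Finset.card_insert_of_notMem, Finset.card_insert_of_notMem,
      Finset.card_singleton] <;> simp <;> grind
  have hTF : T ⊆ F := by
    intro e he
    simp only [T, Finset.mem_insert, Finset.mem_singleton] at he
    rcases he with rfl | rfl | rfl <;> assumption
  have hmid : ∀ s t, s(s, t) ∈ F → s(s, t) ∉ T → s ≠ x ∧ s ≠ y ∧ s ≠ z := by
    intro s t hst hnot
    simp only [T, Finset.mem_insert, Finset.mem_singleton, not_or, Sym2.eq_iff] at hnot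
    have hx := fun v => hdeg x y z v h1 h3
    have hy := fun v => hdeg y x z v (hsymm _ _ h1) h2
    have hz := fun v => hdeg z x y v (hsymm _ _ h3) (hsymm _ _ h2)
    refine ⟨?_, ?_, ?_⟩ <;> rintro rfl <;> grind
  obtain ⟨p, q, hpq, hpqT, hcard, hsub⟩ := exists_mem_rest (m := 1) hTF (by omega)
  obtain ⟨p', q', hpq', hpqT', hcard', hsub'⟩ := exists_mem_rest (m := 0) hsub (by omega)
  have hall : insert s(p', q') (insert s(p, q) T) = F :=
    Finset.eq_of_subset_of_card_le hsub' (by omega)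
  rw [Finset.mem_insert, not_or] at hpqT'
  obtain ⟨s, t, s', t', hst, hst', d1, d2, d3, d4, d5⟩ :=
    exists_orientation_pair (Ne.symm hpqT'.1) (hirr _ _ hpq) (hirr _ _ hpq')
  rw [← hst] at hpq hpqT hall
  rw [← hst'] at hpq' hpqT' hall
  refine hasOpenStress_of_triangle (x := x) (y := y) (z := z) (s := s) (t := t) (s' := s')
    (t' := t') S hS (hS' _ _ h1).1 (hS' _ _ h1).2 (hS' _ _ h2).2 (hS' _ _ hpq).1 (hS' _ _ hpq).2
    (hS' _ _ hpq').1 (hS' _ _ hpq').2 e1 e2 e3 ?_ d4 d1 d2 d3 d5 ?_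
  · rintro v (rfl | rfl | rfl | rfl)
    · exact hmid _ _ hpq hpqT
    · exact hmid _ _ (hsymm _ _ hpq) (by rwa [Sym2.eq_swap])
    · exact hmid _ _ hpq' hpqT'.2
    · exact hmid _ _ (hsymm _ _ hpq') (by rw [Sym2.eq_swap]; exact hpqT'.2)
  · intro i hi j hj hij
    have := (hF i j).2 ⟨hi, hj, hij⟩
    rw [← hall] at this
    simp only [T, Finset.mem_insert, Finset.mem_singleton] at this
    tauto

theorem hasOpenStress_of_containsFourCycle {n k : ℕ} {G : SimpleGraph (Fin n)}
    (S : Finset (Fin n)) (hS : k + 3 ≤ S.card) (F : Finset (Sym2 (Fin n)))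
    (hF : ∀ x y, s(x, y) ∈ F ↔ x ∈ S ∧ y ∈ S ∧ Gᶜ.Adj x y) (hc : F.card = 5)
    (hdeg : ∀ x y z w, s(x, y) ∈ F → s(x, z) ∈ F → s(x, w) ∈ F → y ≠ z → w = y ∨ w = z)
    {x y z w : Fin n} (h1 : s(x, y) ∈ F) (h2 : s(y, z) ∈ F) (h3 : s(z, w) ∈ F)
    (h4 : s(w, x) ∈ F) (hxz : x ≠ z) (hyw : y ≠ w) : HasOpenStress G k := by
  have hirr : ∀ x y, s(x, y) ∈ F → x ≠ y := fun x y h => ((hF x y).1 h).2.2.ne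
  have hS' : ∀ x y, s(x, y) ∈ F → x ∈ S ∧ y ∈ S := fun x y h =>
    ⟨((hF x y).1 h).1, ((hF x y).1 h).2.1⟩
  have hsymm : ∀ x y, s(x, y) ∈ F → s(y, x) ∈ F := fun x y h => by rwa [Sym2.eq_swap]
  have e1 := hirr _ _ h1
  have e2 := hirr _ _ h2
  have e3 := hirr _ _ h3
  have e4 := hirr _ _ h4
  let T : Finset (Sym2 (Fin n)) := {s(x, y), s(y, z), s(z, w), s(w, x)}
  have hT : T.card = 4 := by
    simp only [T]
    rw [Finset.card_insert_of_notMem, Finset.card_insert_of_notMem, Finset.card_insert_of_notMem,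
      Finset.card_singleton] <;> simp <;> grind
  have hTF : T ⊆ F := by
    intro e he
    simp only [T, Finset.mem_insert, Finset.mem_singleton] at he
    rcases he with rfl | rfl | rfl | rfl <;> assumption
  have hmid : ∀ s t, s(s, t) ∈ F → s(s, t) ∉ T → s ≠ x ∧ s ≠ y ∧ s ≠ z ∧ s ≠ w := by
    intro s t hst hnot
    simp only [T, Finset.mem_insert, Finset.mem_singleton, not_or, Sym2.eq_iff] at hnot
    have hx := fun v => hdeg x y w v h1 (hsymm _ _ h4)
    have hy := fun v => hdeg y x z v (hsymm _ _ h1) h2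
    have hz := fun v => hdeg z y w v (hsymm _ _ h2) h3
    have hw := fun v => hdeg w z x v (hsymm _ _ h3) h4
    refine ⟨?_, ?_, ?_, ?_⟩ <;> rintro rfl <;> grind
  obtain ⟨s, t, hst, hnot, hcard, hsub⟩ := exists_mem_rest (m := 0) hTF (by omega)
  have hall : insert s(s, t) T = F := Finset.eq_of_subset_of_card_le hsub (by omega)
  refine hasOpenStress_of_fourCycle (x := x) (y := y) (z := z) (w := w) (s := s) (t := t) S hS
    (hS' _ _ h1).1 (hS' _ _ h1).2 (hS' _ _ h3).1 (hS' _ _ h3).2 (hS' _ _ hst).1 (hS' _ _ hst).2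
    e1 hxz e4.symm e2 hyw e3 (hirr _ _ hst) (hmid _ _ hst hnot)
    (hmid _ _ (hsymm _ _ hst) (by rwa [Sym2.eq_swap])) ?_
  intro i hi j hj hij
  have := (hF i j).2 ⟨hi, hj, hij⟩
  rw [← hall] at this
  simp only [T, Finset.mem_insert, Finset.mem_singleton] at this
  tauto

/-- Five non-edges, three of which form a path that is disjoint from the other two. -/
theorem hasOpenStress_of_threePath {n k : ℕ} {G : SimpleGraph (Fin n)} (S : Finset (Fin n))
    (hS : k + 3 ≤ S.card) (F : Finset (Sym2 (Fin n)))
    (hF : ∀ x y, s(x, y) ∈ F ↔ x ∈ S ∧ y ∈ S ∧ Gᶜ.Adj x y) (hc : F.card = 5)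
    {x y z w : Fin n} (h1 : s(x, y) ∈ F) (h2 : s(y, z) ∈ F) (h3 : s(z, w) ∈ F)
    (hxz : x ≠ z) (hxw : x ≠ w) (hyw : y ≠ w)
    (hmid : ∀ s t, s(s, t) ∈ F → s(s, t) = s(x, y) ∨ s(s, t) = s(y, z) ∨ s(s, t) = s(z, w) ∨
      s ≠ x ∧ s ≠ y ∧ s ≠ z ∧ s ≠ w) : HasOpenStress G k := by
  have hirr : ∀ x y, s(x, y) ∈ F → x ≠ y := fun x y h => ((hF x y).1 h).2.2.ne
  have hS' : ∀ x y, s(x, y) ∈ F → x ∈ S ∧ y ∈ S := fun x y h =>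
    ⟨((hF x y).1 h).1, ((hF x y).1 h).2.1⟩
  have hsymm : ∀ x y, s(x, y) ∈ F → s(y, x) ∈ F := fun x y h => by rwa [Sym2.eq_swap]
  have e1 := hirr _ _ h1
  have e2 := hirr _ _ h2
  have e3 := hirr _ _ h3
  let T : Finset (Sym2 (Fin n)) := {s(x, y), s(y, z), s(z, w)}
  have hT : T.card = 3 := by
    simp only [T]
    rw [Finset.card_insert_of_notMem, Finset.card_insert_of_notMem,
      Finset.card_singleton] <;> simp <;> grind
  have hTF : T ⊆ F := by
    intro e he
    simp only [T, Finset.mem_insert, Finset.mem_singleton] at he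
    rcases he with rfl | rfl | rfl <;> assumption
  have hmid' : ∀ s t, s(s, t) ∈ F → s(s, t) ∉ T → s ≠ x ∧ s ≠ y ∧ s ≠ z ∧ s ≠ w := by
    intro s t hst hnot
    simp only [T, Finset.mem_insert, Finset.mem_singleton, not_or] at hnot
    have := hmid s t hst
    tauto
  obtain ⟨p, q, hpq, hpqT, hcard, hsub⟩ := exists_mem_rest (m := 1) hTF (by omega)
  obtain ⟨p', q', hpq', hpqT', hcard', hsub'⟩ := exists_mem_rest (m := 0) hsub (by omega)
  have hall : insert s(p', q') (insert s(p, q) T) = F :=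
    Finset.eq_of_subset_of_card_le hsub' (by omega)
  rw [Finset.mem_insert, not_or] at hpqT'
  obtain ⟨s, t, s', t', hst, hst', d1, d2, d3, d4, d5⟩ :=
    exists_orientation_pair (Ne.symm hpqT'.1) (hirr _ _ hpq) (hirr _ _ hpq')
  rw [← hst] at hpq hpqT hall
  rw [← hst'] at hpq' hpqT' hall
  have m1 := hmid' _ _ hpq hpqT
  have m2 := hmid' _ _ (hsymm _ _ hpq) (by rwa [Sym2.eq_swap])
  have m3 := hmid' _ _ hpq' hpqT'.2
  have m4 := hmid' _ _ (hsymm _ _ hpq') (by rw [Sym2.eq_swap]; exact hpqT'.2)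
  refine hasOpenStress_of_chain S hS F hF ![x, y, z, s, t'] ![y, z, w, t, s'] ?_ ?_ ?_ ?_ ?_
  · intro q; fin_cases q <;> simp <;> grind
  · intro q; fin_cases q <;> simp <;> grind
  · intro e he
    rw [← hall] at he
    simp only [T, Finset.mem_insert, Finset.mem_singleton] at he
    rcases he with he | he | he | he | he
    exacts [⟨4, he.trans Sym2.eq_swap⟩, ⟨3, he⟩, ⟨0, he⟩, ⟨1, he⟩, ⟨2, he⟩]
  · intro i j; fin_cases i <;> fin_cases j <;> simp <;> grind
  · intro i j; fin_cases i <;> fin_cases j <;> simp <;> grind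

/-- Among three edges of which at most one pair is incident, some edge is disjoint from the other
two. -/
theorem exists_disjoint_edge {V : Type*} [DecidableEq V] {F : Finset (Sym2 V)}
    (hQ : ∀ x y z, s(x, y) ∈ F → s(x, z) ∈ F → y ≠ z → ∀ s t, s(s, t) ∈ F →
      s(s, t) = s(x, y) ∨ s(s, t) = s(x, z) ∨ s ≠ x ∧ s ≠ y ∧ s ≠ z)
    {a b c d e f : V} (hab : s(a, b) ∈ F) (hcd : s(c, d) ∈ F) (hef : s(e, f) ∈ F)
    (h1 : s(a, b) ≠ s(c, d)) (h2 : s(a, b) ≠ s(e, f)) (h3 : s(c, d) ≠ s(e, f)) :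
    (∀ v, (v = e ∨ v = f) → v ≠ a ∧ v ≠ b ∧ v ≠ c ∧ v ≠ d) ∨
    (∀ v, (v = c ∨ v = d) → v ≠ a ∧ v ≠ b ∧ v ≠ e ∧ v ≠ f) ∨
    (∀ v, (v = a ∨ v = b) → v ≠ c ∧ v ≠ d ∧ v ≠ e ∧ v ≠ f) := by
  have hsymm : ∀ x y, s(x, y) ∈ F → s(y, x) ∈ F := fun x y h => by rwa [Sym2.eq_swap]
  simp only [ne_eq, Sym2.eq_iff] at hQ h1 h2 h3
  have share : ∀ a b c d e f : V, s(a, b) ∈ F → s(c, d) ∈ F → s(e, f) ∈ F →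
      ¬ (a = c ∧ b = d ∨ a = d ∧ b = c) → ¬ (a = e ∧ b = f ∨ a = f ∧ b = e) →
      ¬ (c = e ∧ d = f ∨ c = f ∧ d = e) → (a = c ∨ a = d ∨ b = c ∨ b = d) →
      ∀ v, (v = e ∨ v = f) → v ≠ a ∧ v ≠ b ∧ v ≠ c ∧ v ≠ d := by
    intro a b c d e f hab hcd hef h1 h2 h3 hs
    have hba := hsymm _ _ hab
    have hdc := hsymm _ _ hcd
    have hfe := hsymm _ _ hef
    rcases hs with rfl | rfl | rfl | rfl
    · have q := hQ a b d hab hcd (by grind)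
      have q1 := q e f hef
      have q2 := q f e hfe
      grind
    · have q := hQ a b c hab hdc (by grind)
      have q1 := q e f hef
      have q2 := q f e hfe
      grind
    · have q := hQ b a d hba hcd (by grind)
      have q1 := q e f hef
      have q2 := q f e hfe
      grind
    · have q := hQ b a c hba hdc (by grind)
      have q1 := q e f hef
      have q2 := q f e hfe
      grind
  by_cases c1 : a = c ∨ a = d ∨ b = c ∨ b = d
  · exact Or.inl (share a b c d e f hab hcd hef h1 h2 h3 c1)
  by_cases c2 : a = e ∨ a = f ∨ b = e ∨ b = f
  · refine Or.inr (Or.inl fun v hv => ?_)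
    exact share a b e f c d hab hef hcd h2 h1
      (by rintro (⟨rfl, rfl⟩ | ⟨rfl, rfl⟩) <;> simp at h3) c2 v hv
  · refine Or.inr (Or.inr ?_)
    clear share hQ
    grind

set_option maxHeartbeats 800000 in
theorem hasOpenStress_of_twoPath {n k : ℕ} {G : SimpleGraph (Fin n)} (S : Finset (Fin n))
    (hS : k + 3 ≤ S.card) (F : Finset (Sym2 (Fin n)))
    (hF : ∀ x y, s(x, y) ∈ F ↔ x ∈ S ∧ y ∈ S ∧ Gᶜ.Adj x y) (hc : F.card = 5)
    (hQ : ∀ x y z, s(x, y) ∈ F → s(x, z) ∈ F → y ≠ z → ∀ s t, s(s, t) ∈ F →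
      s(s, t) = s(x, y) ∨ s(s, t) = s(x, z) ∨ s ≠ x ∧ s ≠ y ∧ s ≠ z)
    {x y z : Fin n} (h1 : s(x, y) ∈ F) (h2 : s(x, z) ∈ F) (hyz : y ≠ z) : HasOpenStress G k := by
  have hirr : ∀ x y, s(x, y) ∈ F → x ≠ y := fun x y h => ((hF x y).1 h).2.2.ne
  have hS' : ∀ x y, s(x, y) ∈ F → x ∈ S ∧ y ∈ S := fun x y h =>
    ⟨((hF x y).1 h).1, ((hF x y).1 h).2.1⟩
  have hsymm : ∀ x y, s(x, y) ∈ F → s(y, x) ∈ F := fun x y h => by rwa [Sym2.eq_swap]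
  have e1 := hirr _ _ h1
  have e2 := hirr _ _ h2
  let T : Finset (Sym2 (Fin n)) := {s(x, y), s(x, z)}
  have hT : T.card = 2 := by
    simp only [T]
    rw [Finset.card_insert_of_notMem, Finset.card_singleton]
    simp
    grind
  have hTF : T ⊆ F := by
    intro e he
    simp only [T, Finset.mem_insert, Finset.mem_singleton] at he
    rcases he with rfl | rfl <;> assumption
  have hmid : ∀ s t, s(s, t) ∈ F → s(s, t) ∉ T → s ≠ x ∧ s ≠ y ∧ s ≠ z := by
    intro s t hst hnot
    simp only [T, Finset.mem_insert, Finset.mem_singleton, not_or] at hnot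
    have := hQ x y z h1 h2 hyz s t hst
    tauto
  obtain ⟨a, b, hab, habT, hcard, hsub⟩ := exists_mem_rest (m := 2) hTF (by omega)
  obtain ⟨c, d, hcd, hcdT, hcard', hsub'⟩ := exists_mem_rest (m := 1) hsub (by omega)
  obtain ⟨e, f, hef, hefT, hcard'', hsub''⟩ := exists_mem_rest (m := 0) hsub' (by omega)
  have hall : insert s(e, f) (insert s(c, d) (insert s(a, b) T)) = F :=
    Finset.eq_of_subset_of_card_le hsub'' (by omega)
  rw [Finset.mem_insert, not_or] at hcdT
  rw [Finset.mem_insert, Finset.mem_insert, not_or, not_or] at hefT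
  have key : ∀ a b c d e f : Fin n, s(a, b) ∈ F → s(c, d) ∈ F → s(e, f) ∈ F →
      s(a, b) ∉ T → s(c, d) ∉ T → s(e, f) ∉ T → s(a, b) ≠ s(c, d) →
      (∀ g ∈ F, g = s(a, b) ∨ g = s(c, d) ∨ g = s(e, f) ∨ g ∈ T) →
      (∀ v, (v = e ∨ v = f) → v ≠ a ∧ v ≠ b ∧ v ≠ c ∧ v ≠ d) → HasOpenStress G k := by
    intro p q p' q' e f hpq hpq' hef hpqT hpqT' hefT hne hall hdis
    have f0 := hirr _ _ hef
    obtain ⟨s, t, s', t', hst, hst', d1, d2, d3, d4, d5⟩ :=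
      exists_orientation_pair hne (hirr _ _ hpq) (hirr _ _ hpq')
    have f1 := hdis e (Or.inl rfl)
    have f2 := hdis f (Or.inr rfl)
    have f3 : (e ≠ s ∧ e ≠ t ∧ f ≠ s ∧ f ≠ t) ∧ e ≠ s' ∧ e ≠ t' ∧ f ≠ s' ∧ f ≠ t' := by
      rw [Sym2.eq_iff] at hst hst'
      clear hQ hall hmid hdis
      grind
    rw [← hst] at hpq hpqT hall
    rw [← hst'] at hpq' hpqT' hall
    have m1 := hmid _ _ hpq hpqT
    have m2 := hmid _ _ (hsymm _ _ hpq) (by rwa [Sym2.eq_swap])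
    have m3 := hmid _ _ hpq' hpqT'
    have m4 := hmid _ _ (hsymm _ _ hpq') (by rwa [Sym2.eq_swap])
    have m5 := hmid _ _ hef hefT
    have m6 := hmid _ _ (hsymm _ _ hef) (by rwa [Sym2.eq_swap])
    have i1 := hS' _ _ h1
    have i2 := hS' _ _ h2
    have i3 := hS' _ _ hpq
    have i4 := hS' _ _ hpq'
    have i5 := hS' _ _ hef
    refine hasOpenStress_of_chain S hS F hF ![y, x, s, t', e] ![x, z, t, s', f] ?_ ?_ ?_ ?_ ?_
    · intro q; fin_cases q <;> simp [i1, i3, i4, i5]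
    · intro q; fin_cases q <;> simp [i1, i2, i3, i4, i5]
    · intro g hg
      have := hall g hg
      simp only [T, Finset.mem_insert, Finset.mem_singleton] at this
      rcases this with he | he | he | he | he
      exacts [⟨2, he⟩, ⟨3, he.trans Sym2.eq_swap⟩, ⟨4, he⟩, ⟨0, he.trans Sym2.eq_swap⟩, ⟨1, he⟩]
    · clear hQ hall hmid hdis hirr hS' hsymm hF
      intro i j; fin_cases i <;> fin_cases j <;> simp <;> grind
    · clear hQ hall hmid hdis hirr hS' hsymm hF
      intro i j; fin_cases i <;> fin_cases j <;> simp <;> grind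
  have hall' : ∀ g ∈ F, g = s(e, f) ∨ g = s(c, d) ∨ g = s(a, b) ∨ g ∈ T := by
    intro g hg
    rw [← hall] at hg
    simpa only [Finset.mem_insert] using hg
  rcases exists_disjoint_edge hQ hab hcd hef (Ne.symm hcdT.1) (Ne.symm hefT.2.1) (Ne.symm hefT.1)
    with hd | hd | hd
  · exact key a b c d e f hab hcd hef habT hcdT.2 hefT.2.2 (Ne.symm hcdT.1)
      (fun g hg => by have := hall' g hg; tauto) hd
  · exact key a b e f c d hab hef hcd habT hefT.2.2 hcdT.2 (Ne.symm hefT.2.1)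
      (fun g hg => by have := hall' g hg; tauto) hd
  · exact key c d e f a b hcd hef hab hcdT.2 hefT.2.2 habT (Ne.symm hefT.1)
      (fun g hg => by have := hall' g hg; tauto) hd

theorem exists_matching_enumeration {V : Type*} [DecidableEq V] {m : ℕ} (F : Finset (Sym2 V))
    (hc : F.card = m) (hirr : ∀ x y, s(x, y) ∈ F → x ≠ y)
    (hM : ∀ x y z, s(x, y) ∈ F → s(x, z) ∈ F → y = z) :
    ∃ a b : Fin m → V, (∀ q, s(a q, b q) ∈ F) ∧ (∀ e ∈ F, ∃ q, e = s(a q, b q)) ∧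
      (∀ i j, i ≠ j → a i ≠ a j ∧ b i ≠ b j) ∧ ∀ i j, a i ≠ b j := by
  let ε := F.equivFinOfCardEq hc
  have hrep : ∀ e : Sym2 V, ∃ z : V × V, s(z.1, z.2) = e := fun e => by
    induction e with
    | h x y => exact ⟨(x, y), rfl⟩
  choose r hr using hrep
  let a : Fin m → V := fun q => (r (ε.symm q).1).1
  let b : Fin m → V := fun q => (r (ε.symm q).1).2
  have hab : ∀ q, s(a q, b q) = (ε.symm q).1 := fun q => hr _
  have hmem : ∀ q, s(a q, b q) ∈ F := fun q => by rw [hab]; exact (ε.symm q).2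
  have hmem' : ∀ q, s(b q, a q) ∈ F := fun q => by rw [Sym2.eq_swap]; exact hmem q
  have hinj : ∀ i j, s(a i, b i) = s(a j, b j) → i = j := fun i j h => by
    rw [hab, hab] at h
    exact ε.symm.injective (Subtype.ext h)
  refine ⟨a, b, hmem, fun e he => ⟨ε ⟨e, he⟩, by rw [hab]; simp⟩, fun i j hij => ⟨fun h => ?_,
    fun h => ?_⟩, fun i j h => ?_⟩
  · have := hM (a i) (b i) (b j) (hmem i) (h ▸ hmem j)
    exact hij (hinj i j (by rw [h, this]))
  · have := hM (b i) (a i) (a j) (hmem' i) (h ▸ hmem' j)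
    exact hij (hinj i j (by rw [h, this]))
  · have h1 := hM (a i) (b i) (a j) (hmem i) (h ▸ hmem' j)
    have h2 := hinj i j (by rw [h, h1, Sym2.eq_swap])
    subst h2
    exact hirr _ _ (hmem i) h

theorem hasOpenStress_of_matching {n k : ℕ} {G : SimpleGraph (Fin n)} (S : Finset (Fin n))
    (hS : k + 3 ≤ S.card) (F : Finset (Sym2 (Fin n)))
    (hF : ∀ x y, s(x, y) ∈ F ↔ x ∈ S ∧ y ∈ S ∧ Gᶜ.Adj x y) (hc : F.card = 4 ∨ F.card = 5)
    (hM : ∀ x y z, s(x, y) ∈ F → s(x, z) ∈ F → y = z) : HasOpenStress G k := by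
  have hirr : ∀ x y, s(x, y) ∈ F → x ≠ y := fun x y h => ((hF x y).1 h).2.2.ne
  have hS' : ∀ x y, s(x, y) ∈ F → x ∈ S ∧ y ∈ S := fun x y h =>
    ⟨((hF x y).1 h).1, ((hF x y).1 h).2.1⟩
  rcases hc with hc | hc
  · obtain ⟨a, b, hmem, hcov, hne, hab⟩ := exists_matching_enumeration F hc hirr hM
    have hmS := fun q => hS' _ _ (hmem q)
    refine hasOpenStress_of_chain S hS F hF (Fin.snoc a (b 3)) (Fin.snoc b (a 0)) ?_ ?_ ?_ ?_ ?_
    · intro q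
      induction q using Fin.lastCases with
      | last => simpa only [Fin.snoc_last, Fin.snoc_castSucc] using (hmS 3).2
      | cast q => simpa only [Fin.snoc_last, Fin.snoc_castSucc] using (hmS q).1
    · intro q
      induction q using Fin.lastCases with
      | last => simpa only [Fin.snoc_last, Fin.snoc_castSucc] using (hmS 0).1
      | cast q => simpa only [Fin.snoc_last, Fin.snoc_castSucc] using (hmS q).2
    · intro e he
      obtain ⟨q, hq⟩ := hcov e he
      exact ⟨q.castSucc, by simpa only [Fin.snoc_castSucc] using hq⟩
    · intro i j
      induction i using Fin.lastCases with
      | last =>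
        induction j using Fin.lastCases with
        | last => simp
        | cast j => intro _; simpa only [Fin.snoc_last, Fin.snoc_castSucc] using ⟨(hab j 3).symm, hab 0 j⟩
      | cast i =>
        induction j using Fin.lastCases with
        | last => intro _; simpa only [Fin.snoc_last, Fin.snoc_castSucc] using ⟨hab i 3, (hab 0 i).symm⟩
        | cast j => intro h; simpa only [Fin.snoc_last, Fin.snoc_castSucc] using hne i j (fun h' => h (by rw [h']))
    · intro i j
      induction i using Fin.lastCases with
      | last =>
        induction j using Fin.lastCases with
        | last => intro _; simpa only [Fin.snoc_last, Fin.snoc_castSucc] using (hab 0 3).symm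
        | cast j =>
          intro h
          have : (3 : Fin 4) ≠ j := by rintro rfl; exact h rfl
          simpa only [Fin.snoc_last, Fin.snoc_castSucc] using (hne 3 j this).2
      | cast i =>
        induction j using Fin.lastCases with
        | last =>
          intro h
          have : i ≠ 0 := by rintro rfl; exact h rfl
          simpa only [Fin.snoc_last, Fin.snoc_castSucc] using (hne i 0 this).1
        | cast j => intro _; simpa only [Fin.snoc_last, Fin.snoc_castSucc] using hab i j
  · obtain ⟨a, b, hmem, hcov, hne, hab⟩ := exists_matching_enumeration F hc hirr hM
    exact hasOpenStress_of_chain S hS F hF a b (fun q => (hS' _ _ (hmem q)).1)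
      (fun q => (hS' _ _ (hmem q)).2) hcov hne fun i j _ => hab i j

theorem hasOpenStress_of_degree_le_two {n k : ℕ} {G : SimpleGraph (Fin n)} (S : Finset (Fin n))
    (hS : k + 3 ≤ S.card) (F : Finset (Sym2 (Fin n)))
    (hF : ∀ x y, s(x, y) ∈ F ↔ x ∈ S ∧ y ∈ S ∧ Gᶜ.Adj x y) (hc : F.card = 5)
    (hdeg : ∀ x y z w, s(x, y) ∈ F → s(x, z) ∈ F → s(x, w) ∈ F → y ≠ z → w = y ∨ w = z) :
    HasOpenStress G k := by
  have hirr : ∀ x y, s(x, y) ∈ F → x ≠ y := fun x y h => ((hF x y).1 h).2.2.ne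
  have hsymm : ∀ x y, s(x, y) ∈ F → s(y, x) ∈ F := fun x y h => by rwa [Sym2.eq_swap]
  by_contra hno
  have hn3 : ∀ x y z, s(x, y) ∈ F → s(y, z) ∈ F → s(x, z) ∉ F := fun x y z h1 h2 h3 =>
    hno (hasOpenStress_of_containsTriangle S hS F hF hc hdeg h1 h2 h3)
  have hn4 : ∀ x y z w, s(x, y) ∈ F → s(y, z) ∈ F → s(z, w) ∈ F → x ≠ z → y ≠ w →
      s(w, x) ∉ F := fun x y z w h1 h2 h3 hxz hyw h4 =>
    hno (hasOpenStress_of_containsFourCycle S hS F hF hc hdeg h1 h2 h3 h4 hxz hyw)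
  have hn5 : ∀ x y z w u, s(x, y) ∈ F → s(y, z) ∈ F → s(z, w) ∈ F → s(w, u) ∈ F →
      x ≠ z → x ≠ w → x ≠ u → y ≠ w → y ≠ u → z ≠ u → False :=
    fun x y z w u h1 h2 h3 h4 d1 d2 d3 d4 d5 d6 =>
      hno (hasOpenStress_of_fourPath S hS F hF hc hdeg h1 h2 h3 h4 d1 d2 d3 d4 d5 d6)
  have hend : ∀ x y z w, s(x, y) ∈ F → s(y, z) ∈ F → s(z, w) ∈ F → x ≠ z → x ≠ w → y ≠ w →
      ∀ t, s(w, t) ∈ F → t = z := by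
    intro x y z w h1 h2 h3 hxz hxw hyw t ht
    by_contra htz
    by_cases htx : t = x
    · subst htx; exact hn4 t y z w h1 h2 h3 hxz hyw ht
    by_cases hty : t = y
    · subst hty; exact hn3 t z w h2 h3 (hsymm _ _ ht)
    exact hn5 x y z w t h1 h2 h3 ht hxz hxw (Ne.symm htx) hyw (Ne.symm hty) (Ne.symm htz)
  have hnp : ∀ x y z w, s(x, y) ∈ F → s(y, z) ∈ F → s(z, w) ∈ F → x ≠ z → x ≠ w → y ≠ w →
      False := by
    intro x y z w h1 h2 h3 hxz hxw hyw
    refine hno (hasOpenStress_of_threePath S hS F hF hc h1 h2 h3 hxz hxw hyw fun s t hst => ?_)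
    by_cases c1 : s = x
    · subst c1
      have := hend w z y s (hsymm _ _ h3) (hsymm _ _ h2) (hsymm _ _ h1) hyw.symm hxw.symm
        hxz.symm t hst
      exact Or.inl (by rw [this])
    by_cases c2 : s = y
    · subst c2
      rcases hdeg s x z t (hsymm _ _ h1) h2 hst hxz with rfl | rfl
      · exact Or.inl Sym2.eq_swap
      · exact Or.inr (Or.inl rfl)
    by_cases c3 : s = z
    · subst c3
      rcases hdeg s y w t (hsymm _ _ h2) h3 hst hyw with rfl | rfl
      · exact Or.inr (Or.inl Sym2.eq_swap)
      · exact Or.inr (Or.inr (Or.inl rfl))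
    by_cases c4 : s = w
    · subst c4
      have := hend x y z s h1 h2 h3 hxz hxw hyw t hst
      exact Or.inr (Or.inr (Or.inl (by rw [this, Sym2.eq_swap])))
    exact Or.inr (Or.inr (Or.inr ⟨c1, c2, c3, c4⟩))
  have hQ : ∀ x y z, s(x, y) ∈ F → s(x, z) ∈ F → y ≠ z → ∀ s t, s(s, t) ∈ F →
      s(s, t) = s(x, y) ∨ s(s, t) = s(x, z) ∨ s ≠ x ∧ s ≠ y ∧ s ≠ z := by
    have hleaf : ∀ x y z, s(x, y) ∈ F → s(x, z) ∈ F → y ≠ z → ∀ t, s(y, t) ∈ F → t = x := by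
      intro x y z h1 h2 hyz t ht
      by_contra htx
      by_cases htz : t = z
      · subst htz; exact hn3 x y t h1 ht h2
      exact hnp t y x z (hsymm _ _ ht) (hsymm _ _ h1) h2 htx htz hyz
    intro x y z h1 h2 hyz s t hst
    by_cases c1 : s = x
    · subst c1
      rcases hdeg s y z t h1 h2 hst hyz with rfl | rfl
      · exact Or.inl rfl
      · exact Or.inr (Or.inl rfl)
    by_cases c2 : s = y
    · subst c2
      rw [hleaf x s z h1 h2 hyz t hst]
      exact Or.inl Sym2.eq_swap
    by_cases c3 : s = z
    · subst c3
      rw [hleaf x s y h2 h1 hyz.symm t hst]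
      exact Or.inr (Or.inl Sym2.eq_swap)
    exact Or.inr (Or.inr ⟨c1, c2, c3⟩)
  refine hno (hasOpenStress_of_matching S hS F hF (Or.inr hc) fun x y z h1 h2 => ?_)
  by_contra hyz
  exact hno (hasOpenStress_of_twoPath S hS F hF hc hQ h1 h2 hyz)

theorem hasOpenStress_of_card_le_five {n k : ℕ} {G : SimpleGraph (Fin n)} (S : Finset (Fin n))
    (hS : k + 3 ≤ S.card) (F : Finset (Sym2 (Fin n)))
    (hF : ∀ x y, s(x, y) ∈ F ↔ x ∈ S ∧ y ∈ S ∧ Gᶜ.Adj x y) (hc : F.card ≤ 5) :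
    HasOpenStress G k := by
  classical
  by_cases hv : ∃ v, (F.filter fun e => v ∉ e).card ≤ 2
  · obtain ⟨v, hv⟩ := hv
    refine hasOpenStress_of_card_le_two (S.erase v) ?_ (F.filter fun e => v ∉ e) ?_ hv
    · have := Finset.pred_card_le_card_erase (s := S) (a := v)
      omega
    · intro x y
      simp only [Finset.mem_filter, hF, Sym2.mem_iff, Finset.mem_erase]
      grind
  push Not at hv
  have hsplit : ∀ v, (F.filter fun e => v ∈ e).card + 3 ≤ F.card := by
    intro v
    have h1 := Finset.card_filter_add_card_filter_not (s := F) (fun e => v ∈ e)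
    have h2 := hv v
    omega
  have hsub : ∀ (v : Fin n) (T : Finset (Sym2 (Fin n))), (∀ e ∈ T, e ∈ F ∧ v ∈ e) →
      T.card + 3 ≤ F.card := by
    intro v T hT
    have : T ⊆ F.filter fun e => v ∈ e := fun e he => Finset.mem_filter.2 (hT e he)
    have := Finset.card_le_card this
    have := hsplit v
    omega
  by_cases h5 : F.card = 5
  · refine hasOpenStress_of_degree_le_two S hS F hF h5 fun x y z w hy hz hw hyz => ?_
    by_contra hcon
    push Not at hcon
    have := hsub x {s(x, y), s(x, z), s(x, w)} (by
      intro e he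
      simp only [Finset.mem_insert, Finset.mem_singleton] at he
      rcases he with rfl | rfl | rfl <;> exact ⟨by assumption, Sym2.mem_mk_left _ _⟩)
    have hcard : ({s(x, y), s(x, z), s(x, w)} : Finset (Sym2 (Fin n))).card = 3 := by
      rw [Finset.card_insert_of_notMem, Finset.card_insert_of_notMem, Finset.card_singleton]
      · simp only [Finset.mem_singleton, Sym2.congr_right]
        exact Ne.symm hcon.2
      · simp only [Finset.mem_insert, Finset.mem_singleton, Sym2.congr_right, not_or]
        exact ⟨hyz, Ne.symm hcon.1⟩
    omega
  · have hpos : 0 < n := by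
      by_contra h0
      have h1 := Finset.card_le_univ S
      rw [Fintype.card_fin] at h1
      omega
    have hFpos : 0 < F.card := by
      have := hsplit ⟨0, hpos⟩
      omega
    obtain ⟨e, he⟩ := Finset.card_pos.1 hFpos
    have h4 : 4 ≤ F.card := by
      induction e with
      | h x y =>
        have := hsub x {s(x, y)} (by simpa using he)
        simpa using this
    refine hasOpenStress_of_matching S hS F hF (Or.inl (by omega)) fun x y z hy hz => ?_
    by_contra hyz
    have := hsub x {s(x, y), s(x, z)} (by
      intro e he
      simp only [Finset.mem_insert, Finset.mem_singleton] at he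
      rcases he with rfl | rfl <;> exact ⟨by assumption, Sym2.mem_mk_left _ _⟩)
    rw [Finset.card_pair (fun h' => hyz (Sym2.congr_right.1 h'))] at this
    omega

theorem hasOpenStress_of_not_isIndepGraph {n k : ℕ} {G : SimpleGraph (Fin n)}
    (hG : Gᶜ.edgeSet.ncard ≤ 5) (h : ¬ IsIndepGraph k G) : HasOpenStress G (k + 1) := by
  classical
  have hn : k + 1 < n := not_le.1 fun hle => h (isIndepGraph_of_le G hle)
  have hcard : (Finset.univ : Finset (Fin n)).card = n := Finset.card_fin n
  by_cases h2 : n ≤ k + 2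
  · exact hasOpenStress_of_clique Finset.univ (by omega) fun i _ j _ hij =>
      h (isIndepGraph_of_nonedge h2 hij)
  by_cases h3 : n ≤ k + 3
  · rcases exists_cover_of_not_isIndepGraph (by omega) h3 h with ⟨v, hv⟩ |
      ⟨a, b, c, d, hab, hcd, hac, had, hbc, hbd, hcov⟩
    · exact hasOpenStress_of_star Finset.univ (by omega) v fun i _ j _ => hv i j
    · exact hasOpenStress_of_two_edges Finset.univ (by omega) (Finset.mem_univ a)
        (Finset.mem_univ b) (Finset.mem_univ c) (Finset.mem_univ d) hab hcd hac had hbc hbd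
        fun i _ j _ => hcov i j
  · refine hasOpenStress_of_card_le_five Finset.univ (by omega) Gᶜ.edgeFinset (by simp) ?_
    rwa [← SimpleGraph.coe_edgeFinset, Set.ncard_coe_finset] at hG

theorem HasOpenStress.not_ae_exists_min {n d : ℕ} {G : SimpleGraph (Fin n)}
    (h : HasOpenStress G d) :
    ¬ ∀ᵐ X : Fin n → Fin d → ℝ ∂volume,
      ∃ K ∈ graphModel n G, ∀ K' ∈ graphModel n G,
        mlObjective (Matrix.of X * (Matrix.of X)ᵀ) K ≤
          mlObjective (Matrix.of X * (Matrix.of X)ᵀ) K' := by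
  intro hae
  obtain ⟨X₀, hX₀⟩ := h
  have hpos := Measure.measure_pos_of_mem_nhds (volume : Measure (Fin n → Fin d → ℝ)) hX₀
  have hfreq := frequently_ae_mem_iff.2 hpos.ne'
  obtain ⟨X, ⟨K, hK⟩, hmin⟩ := (hfreq.and_eventually hae).exists
  exact hK.not_exists_min hmin

/-- If the complement of `G` has at most `5` edges, then `MLT(G) = d + 1`, where `d` is the
smallest nonnegative integer such that `G` is `d`-independent. -/
theorem mlt_eq_min_indep_of_compl_edges_le (n : ℕ) (G : SimpleGraph (Fin n))
    (h : Gᶜ.edgeSet.ncard ≤ 5) :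
    ∃ d : ℕ, IsLeast {k : ℕ | IsIndepGraph k G} d ∧ mlt n (graphModel n G) = d + 1 := by
  classical
  have hex : ∃ k, IsIndepGraph k G := ⟨n, isIndepGraph_of_le G (Nat.le_succ n)⟩
  refine ⟨Nat.find hex, ⟨Nat.find_spec hex, fun k hk => Nat.find_min' hex hk⟩, ?_⟩
  refine le_antisymm (Nat.sInf_le ⟨Nat.succ_pos _, ?_⟩) (le_csInf ⟨Nat.find hex + 1,
    Nat.succ_pos _, ?_⟩ ?_)
  · exact (ae_no_psdStress (Nat.find_spec hex)).mono fun X hX => exists_min_of_no_psdStress hX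
  · exact (ae_no_psdStress (Nat.find_spec hex)).mono fun X hX => exists_min_of_no_psdStress hX
  · rintro m ⟨hm, hae⟩
    obtain ⟨k, rfl⟩ := Nat.exists_eq_succ_of_ne_zero hm.ne'
    by_contra hlt
    have hk : ¬ IsIndepGraph k G := Nat.find_min hex (by omega)
    exact (hasOpenStress_of_not_isIndepGraph h hk).not_ae_exists_min hae
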